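/- arXiv:2003.05572 — 3 statements merged into one kernel-verified Lean document; each statement's English description precedes it below -/
import Mathlib

section
/- For every x ∈ ℝⁿ, t > 0 and ε > 0 one has 0 < w_ε(x,t) ≤ 1. Moreover, for every ε > 0: if x belongs to the interior of dom J then lim_{t→0⁺} w_ε(x,t) = exp(−J(x)/ε), and if x ∉ dom J then lim_{t→0⁺} w_ε(x,t) = 0. -/
open scoped Topology
open Filter MeasureTheory

/-- The integrand `exp(−(‖x−y‖²/(2t) + J(y))/ε)`, with the convention `exp(−∞) = 0`. -/
noncomputable def heatIntegrand (n : ℕ) (J : EuclideanSpace ℝ (Fin n) → EReal)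
    (x : EuclideanSpace ℝ (Fin n)) (t ε : ℝ) (y : EuclideanSpace ℝ (Fin n)) : ℝ :=
  if J y = ⊤ then 0 else Real.exp (-((‖x - y‖ ^ 2 / (2 * t) + (J y).toReal) / ε))

/-- `w_ε(x,t) = (2πtε)^{−n/2} ∫ exp(−(‖x−y‖²/(2t) + J(y))/ε) dy`. -/
noncomputable def heatSol (n : ℕ) (J : EuclideanSpace ℝ (Fin n) → EReal)
    (x : EuclideanSpace ℝ (Fin n)) (t ε : ℝ) : ℝ :=
  (2 * Real.pi * t * ε) ^ (-(n : ℝ) / 2) * ∫ y, heatIntegrand n J x t ε y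

/-!
With the Boltzmann factor `g = exp (-J / ε)` one has `w_ε(·, t) = Φ_{εt} ⋆ g`, where `Φ_σ` is the
centred Gaussian density of covariance `σ • 1`. As `0 ≤ g ≤ 1` and `g > 0` on `dom J`, a set of
positive measure, the bounds `0 < w_ε ≤ 1` follow. Rescaling gives
`(Φ_σ ⋆ g)(x) = ∫ Φ_1(z) g(x + √σ z) dz`, which by dominated convergence tends to `g x` as `σ → 0⁺`
wherever `g` is continuous. Since `a ↦ exp (-a / ε)` is continuous up to `a = +∞`, it is enough that
`J` be continuous at `x` as an extended-real function: at interior points of `dom J` this is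
continuity of convex functions, and where `J x = +∞` it is lower semicontinuity.
-/

section HeatKernel

variable {V F : Type*} [NormedAddCommGroup V] [InnerProductSpace ℝ V]
  [NormedAddCommGroup F] [NormedSpace ℝ F] {σ r C : ℝ}

/-- The centred Gaussian density of covariance `σ • 1` on a Euclidean space, i.e. the kernel of the
heat semigroup generated by half the Laplacian, at time `σ`. It is meaningful for `0 < σ`. -/
noncomputable def heatKernel (σ : ℝ) (z : V) : ℝ :=
  (2 * Real.pi * σ) ^ (-(Module.finrank ℝ V : ℝ) / 2) * Real.exp (-(‖z‖ ^ 2 / (2 * σ)))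

lemma heatKernel_pos (hσ : 0 < σ) (z : V) : 0 < heatKernel σ z := by
  unfold heatKernel
  positivity

lemma heatKernel_neg (σ : ℝ) (z : V) : heatKernel σ (-z) = heatKernel σ z := by
  simp only [heatKernel, norm_neg]

lemma continuous_heatKernel (σ : ℝ) : Continuous (heatKernel σ : V → ℝ) := by
  unfold heatKernel
  fun_prop

lemma heatKernel_sq_mul_smul (hr : 0 < r) (hσ : 0 ≤ σ) (z : V) :
    heatKernel (r ^ 2 * σ) (r • z) = (r ^ Module.finrank ℝ V)⁻¹ * heatKernel σ z := by
  have h_exponent : ‖r • z‖ ^ 2 / (2 * (r ^ 2 * σ)) = ‖z‖ ^ 2 / (2 * σ) := by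
    rw [norm_smul, mul_pow, Real.norm_of_nonneg hr.le, mul_left_comm,
      mul_div_mul_left _ _ (pow_pos hr 2).ne']
  have h_factor : (r ^ 2) ^ (-(Module.finrank ℝ V : ℝ) / 2) = (r ^ Module.finrank ℝ V)⁻¹ := by
    rw [← Real.rpow_natCast r 2, ← Real.rpow_mul hr.le, Nat.cast_ofNat,
      mul_div_cancel₀ _ two_ne_zero, Real.rpow_neg hr.le, Real.rpow_natCast]
  rw [heatKernel, heatKernel, h_exponent, mul_left_comm, Real.mul_rpow (by positivity)
    (by positivity), h_factor, mul_assoc]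

variable [FiniteDimensional ℝ V] [MeasurableSpace V] [BorelSpace V]

lemma integral_heatKernel (hσ : 0 < σ) : ∫ z : V, heatKernel σ z = 1 := by
  have h_gauss : ∫ z : V, Real.exp (-(‖z‖ ^ 2 / (2 * σ)))
      = (2 * Real.pi * σ) ^ ((Module.finrank ℝ V : ℝ) / 2) := by
    have h := GaussianFourier.integral_rexp_neg_mul_sq_norm (V := V)
      (b := (2 * σ)⁻¹) (by positivity)
    rw [div_inv_eq_mul, mul_left_comm, ← mul_assoc] at h
    simpa only [neg_mul, inv_mul_eq_div] using h
  simp only [heatKernel]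
  rw [integral_const_mul, h_gauss, ← Real.rpow_add (by positivity), neg_div, neg_add_cancel,
    Real.rpow_zero]

lemma integrable_heatKernel (hσ : 0 < σ) : Integrable (heatKernel σ : V → ℝ) :=
  .of_integral_ne_zero ((integral_heatKernel hσ).trans_ne one_ne_zero)

/-- The convolution of `f` with the heat kernel: the Gaussian average of `f` around `x`, which for
bounded `f` is the solution at time `σ` of the heat equation with initial datum `f`. -/
noncomputable def heatMean (f : V → F) (σ : ℝ) (x : V) : F :=
  ∫ y, heatKernel σ (x - y) • f y

lemma heatMean_sq_mul (f : V → F) (hr : 0 < r) (hσ : 0 ≤ σ) (x : V) :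
    heatMean f (r ^ 2 * σ) x = ∫ z, heatKernel σ z • f (x + r • z) := by
  have h_pow : 0 < r ^ Module.finrank ℝ V := pow_pos hr _
  calc heatMean f (r ^ 2 * σ) x
      = ∫ z, heatKernel (r ^ 2 * σ) z • f (x + z) := by
        rw [heatMean, ← integral_add_left_eq_self _ x]
        simp only [sub_add_cancel_left, heatKernel_neg]
    _ = r ^ Module.finrank ℝ V • ∫ z, heatKernel (r ^ 2 * σ) (r • z) • f (x + r • z) := by
        rw [Measure.integral_comp_smul_of_nonneg volume
          (fun z => heatKernel (r ^ 2 * σ) z • f (x + z)) r (hR := hr.le), smul_inv_smul₀ h_pow.ne']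
    _ = ∫ z, heatKernel σ z • f (x + r • z) := by
        simp only [heatKernel_sq_mul_smul hr hσ, mul_smul, integral_smul]
        rw [smul_inv_smul₀ h_pow.ne']

lemma norm_heatMean_le {f : V → F} (hσ : 0 < σ) (hf : ∀ y, ‖f y‖ ≤ C) (x : V) :
    ‖heatMean f σ x‖ ≤ C := by
  have h_norm (y : V) : ‖heatKernel σ (x - y) • f y‖ ≤ heatKernel σ (x - y) * C := by
    rw [norm_smul, Real.norm_of_nonneg (heatKernel_pos hσ _).le]
    exact mul_le_mul_of_nonneg_left (hf y) (heatKernel_pos hσ _).le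
  calc ‖heatMean f σ x‖
      ≤ ∫ y, heatKernel σ (x - y) * C :=
        norm_integral_le_of_norm_le (((integrable_heatKernel hσ).comp_sub_left x).mul_const C)
          (.of_forall h_norm)
    _ = C := by
        rw [integral_mul_const, integral_sub_left_eq_self (heatKernel σ) volume x,
          integral_heatKernel hσ, one_mul]

lemma heatMean_pos {f : V → ℝ} (hσ : 0 < σ) (hf_meas : AEStronglyMeasurable f)
    (hf_nonneg : ∀ y, 0 ≤ f y) (hf_le : ∀ y, f y ≤ C) (hf_supp : volume f.support ≠ 0) (x : V) :
    0 < heatMean f σ x := by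
  have h_int : Integrable fun y => heatKernel σ (x - y) * f y :=
    ((integrable_heatKernel hσ).comp_sub_left x).mul_bdd hf_meas
      (.of_forall fun y => (Real.norm_of_nonneg (hf_nonneg y)).trans_le (hf_le y))
  have h_supp : (Function.support fun y => heatKernel σ (x - y) * f y) = f.support := by
    ext y
    simp only [Function.mem_support, mul_ne_zero_iff, (heatKernel_pos hσ (x - y)).ne', ne_eq,
      not_false_eq_true, true_and]
  refine (integral_pos_iff_support_of_nonneg
    (fun y => mul_nonneg (heatKernel_pos hσ _).le (hf_nonneg y)) h_int).2 ?_
  rw [h_supp]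
  exact pos_iff_ne_zero.2 hf_supp

lemma tendsto_heatMean {f : V → F} [CompleteSpace F] {x : V} (hf_meas : AEStronglyMeasurable f)
    (hf_le : ∀ y, ‖f y‖ ≤ C) (hf_cont : ContinuousAt f x) :
    Tendsto (fun σ => heatMean f σ x) (𝓝[>] 0) (𝓝 (f x)) := by
  have h_pos : ∀ᶠ σ : ℝ in 𝓝[>] 0, 0 < √σ :=
    eventually_mem_nhdsWithin.mono fun _ => Real.sqrt_pos.2
  have h_rescale : ∀ᶠ σ in 𝓝[>] 0,
      ∫ z, heatKernel 1 z • f (x + √σ • z) = heatMean f σ x := by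
    filter_upwards [self_mem_nhdsWithin, h_pos] with σ hσ h_sqrt
    rw [← heatMean_sq_mul f h_sqrt zero_le_one, mul_one, Real.sq_sqrt (le_of_lt hσ)]
  have h_lim : ∫ z : V, heatKernel 1 z • f x = f x := by
    rw [integral_smul_const, integral_heatKernel one_pos, one_smul]
  refine Tendsto.congr' h_rescale ?_
  rw [← h_lim]
  refine tendsto_integral_filter_of_dominated_convergence (fun z => heatKernel 1 z * C) ?_ ?_
    ((integrable_heatKernel one_pos).mul_const C) ?_
  · filter_upwards [h_pos] with σ h_sqrt
    exact (continuous_heatKernel 1).aestronglyMeasurable.smul <|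
      hf_meas.comp_quasiMeasurePreserving <|
        (measurePreserving_add_left volume x).quasiMeasurePreserving.comp
          (Measure.quasiMeasurePreserving_smul volume h_sqrt.ne')
  · refine .of_forall fun σ => .of_forall fun z => ?_
    rw [norm_smul, Real.norm_of_nonneg (heatKernel_pos one_pos z).le]
    exact mul_le_mul_of_nonneg_left (hf_le _) (heatKernel_pos one_pos z).le
  · refine .of_forall fun z => (hf_cont.tendsto.comp ?_).const_smul _
    have h_line : Continuous fun σ : ℝ => x + √σ • z := by fun_prop
    simpa only [Real.sqrt_zero, zero_smul, add_zero] using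
      (h_line.tendsto 0).mono_left nhdsWithin_le_nhds

end HeatKernel

section BoltzmannFactor

variable {ε : ℝ} {a : EReal}

/-- The Boltzmann factor `exp (-a / ε)` of an extended-real energy `a` at temperature `ε`, with the
convention `exp (-∞) = 0`. Since `(⊥ : EReal).toReal = 0`, the energy `⊥` gets the factor `1`. -/
noncomputable def boltzmannFactor (ε : ℝ) (a : EReal) : ℝ :=
  if a = ⊤ then 0 else Real.exp (-a.toReal / ε)

@[simp]
lemma boltzmannFactor_top (ε : ℝ) : boltzmannFactor ε ⊤ = 0 := if_pos rfl

lemma boltzmannFactor_of_ne_top (ε : ℝ) (ha : a ≠ ⊤) :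
    boltzmannFactor ε a = Real.exp (-a.toReal / ε) := if_neg ha

lemma boltzmannFactor_nonneg (ε : ℝ) (a : EReal) : 0 ≤ boltzmannFactor ε a := by
  unfold boltzmannFactor
  split_ifs <;> positivity

lemma boltzmannFactor_le_one (hε : 0 ≤ ε) (ha : 0 ≤ a) : boltzmannFactor ε a ≤ 1 := by
  unfold boltzmannFactor
  split_ifs
  · exact zero_le_one
  · exact Real.exp_le_one_iff.2
      (div_nonpos_of_nonpos_of_nonneg (neg_nonpos.2 (EReal.toReal_nonneg ha)) hε)

lemma boltzmannFactor_ne_zero_iff : boltzmannFactor ε a ≠ 0 ↔ a ≠ ⊤ := by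
  simp only [boltzmannFactor, ne_eq, ite_eq_left_iff, Real.exp_ne_zero, imp_false, not_not]

lemma measurable_boltzmannFactor (ε : ℝ) : Measurable (boltzmannFactor ε) :=
  .ite (measurableSet_singleton ⊤) measurable_const
    (Real.measurable_exp.comp (measurable_ereal_toReal.neg.div_const ε))

lemma continuousAt_boltzmannFactor (hε : 0 < ε) (ha : a ≠ ⊥) :
    ContinuousAt (boltzmannFactor ε) a := by
  rcases eq_or_ne a ⊤ with rfl | ha'
  · have h_lim : Tendsto (fun b : EReal => Real.exp (-b.toReal / ε)) (𝓝[≠] ⊤) (𝓝 0) :=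
      Real.tendsto_exp_atBot.comp
        ((tendsto_neg_atTop_atBot.comp EReal.tendsto_toReal_atTop).atBot_div_const hε)
    rw [← continuousWithinAt_compl_self, ContinuousWithinAt, boltzmannFactor_top]
    refine h_lim.congr' ?_
    filter_upwards [self_mem_nhdsWithin] with b hb
    exact (boltzmannFactor_of_ne_top ε hb).symm
  · have h_cont : ContinuousAt (fun b : EReal => Real.exp (-b.toReal / ε)) a :=
      ((EReal.tendsto_toReal ha' ha).neg.div_const ε).rexp
    refine h_cont.congr ?_
    filter_upwards [isOpen_ne.mem_nhds ha'] with b hb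
    exact (boltzmannFactor_of_ne_top ε hb).symm

end BoltzmannFactor

lemma continuousAt_of_lowerSemicontinuousAt_of_eq_top {X Y : Type*} [TopologicalSpace X]
    [LinearOrder Y] [OrderTop Y] [TopologicalSpace Y] [OrderTopology Y] {f : X → Y} {x : X}
    (hf : LowerSemicontinuousAt f x) (hx : f x = ⊤) : ContinuousAt f x :=
  tendsto_order.2 ⟨hf, fun _ ha => absurd (hx ▸ ha) not_top_lt⟩

/-- Convexity of an extended-real-valued function, as Jensen's inequality in `EReal` arithmetic
(`ConvexOn` does not apply, as `EReal` is not a real module). -/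
def EConvex {E : Type*} [AddCommGroup E] [Module ℝ E] (J : E → EReal) : Prop :=
  ∀ y₁ y₂ : E, ∀ a b : ℝ, 0 ≤ a → 0 ≤ b → a + b = 1 →
    J (a • y₁ + b • y₂) ≤ (a : EReal) * J y₁ + (b : EReal) * J y₂

namespace EConvex

section Algebraic

variable {E : Type*} [AddCommGroup E] [Module ℝ E] {J : E → EReal}

lemma convex_ne_top (hJ : EConvex J) : Convex ℝ {y | J y ≠ ⊤} := by
  have h_mul {c : ℝ} {u : EReal} (hc : 0 ≤ c) (hu : u ≠ ⊤) : (c : EReal) * u ≠ ⊤ :=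
    (EReal.mul_ne_top _ _).2 ⟨.inl (EReal.coe_ne_bot c), .inl (EReal.coe_nonneg.2 hc),
      .inl (EReal.coe_ne_top c), .inr hu⟩
  intro y₁ h₁ y₂ h₂ a b ha hb hab
  exact ne_top_of_le_ne_top (EReal.add_ne_top (h_mul ha h₁) (h_mul hb h₂))
    (hJ y₁ y₂ a b ha hb hab)

lemma convexOn_toReal (hJ : EConvex J) (hJ_bot : ∀ y, J y ≠ ⊥) :
    ConvexOn ℝ {y | J y ≠ ⊤} fun y => (J y).toReal := by
  refine ⟨hJ.convex_ne_top, fun y₁ h₁ y₂ h₂ a b ha hb hab => ?_⟩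
  have h_jensen := hJ y₁ y₂ a b ha hb hab
  rw [← EReal.coe_toReal h₁ (hJ_bot y₁), ← EReal.coe_toReal h₂ (hJ_bot y₂),
    ← EReal.coe_toReal (hJ.convex_ne_top h₁ h₂ ha hb hab) (hJ_bot _)] at h_jensen
  exact_mod_cast h_jensen

end Algebraic

lemma continuousAt {E : Type*} [NormedAddCommGroup E] [NormedSpace ℝ E]
    [FiniteDimensional ℝ E] {J : E → EReal} {x : E} (hJ : EConvex J) (hJ_bot : ∀ y, J y ≠ ⊥)
    (hx : x ∈ interior {y | J y ≠ ⊤}) : ContinuousAt J x := by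
  have h_nhds := isOpen_interior.mem_nhds hx
  have h_real : ContinuousAt (fun y => (J y).toReal) x :=
    (hJ.convexOn_toReal hJ_bot).continuousOn_interior.continuousAt h_nhds
  refine (continuous_coe_real_ereal.continuousAt.comp h_real).congr ?_
  filter_upwards [h_nhds] with y hy
  exact EReal.coe_toReal (interior_subset hy) (hJ_bot y)

end EConvex

lemma heatSol_eq_heatMean (n : ℕ) (J : EuclideanSpace ℝ (Fin n) → EReal)
    (x : EuclideanSpace ℝ (Fin n)) (t ε : ℝ) :
    heatSol n J x t ε = heatMean (fun y => boltzmannFactor ε (J y)) (ε * t) x := by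
  have h_integrand (y : EuclideanSpace ℝ (Fin n)) : heatIntegrand n J x t ε y =
      Real.exp (-(‖x - y‖ ^ 2 / (2 * (ε * t)))) * boltzmannFactor ε (J y) := by
    unfold heatIntegrand boltzmannFactor
    split_ifs
    · rw [mul_zero]
    · rw [← Real.exp_add, add_div, div_div, mul_assoc, mul_comm t, neg_add, neg_div]
  simp only [heatSol, heatMean, heatKernel, h_integrand, smul_eq_mul, finrank_euclideanSpace_fin,
    mul_assoc, mul_comm ε t, integral_const_mul]

theorem heatSol_bounds_and_initial_limits_general (n : ℕ) {J : EuclideanSpace ℝ (Fin n) → EReal}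
    (hJ_meas : AEMeasurable J) (hJ_nonneg : ∀ y, 0 ≤ J y) (hJ_dom : volume {y | J y ≠ ⊤} ≠ 0) :
    (∀ (x : EuclideanSpace ℝ (Fin n)) (t ε : ℝ), 0 < t → 0 < ε →
      0 < heatSol n J x t ε ∧ heatSol n J x t ε ≤ 1) ∧
    (∀ (x : EuclideanSpace ℝ (Fin n)) (ε : ℝ), 0 < ε → ContinuousAt J x →
      Tendsto (fun t => heatSol n J x t ε) (𝓝[>] (0 : ℝ)) (𝓝 (boltzmannFactor ε (J x)))) := by
  have h_meas (ε : ℝ) : AEStronglyMeasurable fun y => boltzmannFactor ε (J y) :=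
    ((measurable_boltzmannFactor ε).comp_aemeasurable hJ_meas).aestronglyMeasurable
  have h_le {ε : ℝ} (hε : 0 < ε) (y) : boltzmannFactor ε (J y) ≤ 1 :=
    boltzmannFactor_le_one hε.le (hJ_nonneg y)
  have h_norm_le {ε : ℝ} (hε : 0 < ε) (y) : ‖boltzmannFactor ε (J y)‖ ≤ 1 :=
    (Real.norm_of_nonneg (boltzmannFactor_nonneg ε _)).trans_le (h_le hε y)
  simp only [heatSol_eq_heatMean]
  refine ⟨fun x t ε ht hε => ⟨?_, ?_⟩, fun x ε hε hx => ?_⟩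
  · refine heatMean_pos (mul_pos hε ht) (h_meas ε) (fun y => boltzmannFactor_nonneg ε _)
      (h_le hε) ?_ x
    simpa only [Function.support, boltzmannFactor_ne_zero_iff] using hJ_dom
  · exact (le_abs_self _).trans (norm_heatMean_le (mul_pos hε ht) (h_norm_le hε) x)
  · have h_bot : J x ≠ ⊥ := (EReal.bot_lt_zero.trans_le (hJ_nonneg x)).ne'
    have h_time : Tendsto (fun t => ε * t) (𝓝[>] 0) (𝓝[>] 0) :=
      tendsto_iff_comap.2 (comap_mulLeft_nhdsGT_zero hε).ge
    exact (tendsto_heatMean (h_meas ε) (h_norm_le hε)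
      ((continuousAt_boltzmannFactor hε h_bot).comp hx)).comp h_time

/-- For every `x`, `t > 0`, `ε > 0` one has `0 < w_ε(x,t) ≤ 1`; moreover, for every
`ε > 0`, `lim_{t→0⁺} w_ε(x,t) = exp(−J(x)/ε)` when `x ∈ int(dom J)`, and
`lim_{t→0⁺} w_ε(x,t) = 0` when `x ∉ dom J`. -/
theorem heatSol_bounds_and_initial_limits (n : ℕ) (hn : 1 ≤ n)
    (J : EuclideanSpace ℝ (Fin n) → EReal)
    (hJ_proper_bot : ∀ y, J y ≠ ⊥)
    (hJ_lsc : LowerSemicontinuous J)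
    (hJ_convex : ∀ y₁ y₂ : EuclideanSpace ℝ (Fin n), ∀ a b : ℝ, 0 ≤ a → 0 ≤ b → a + b = 1 →
      J (a • y₁ + b • y₂) ≤ (a : EReal) * J y₁ + (b : EReal) * J y₂)
    (hJ_int : (interior {y : EuclideanSpace ℝ (Fin n) | J y ≠ ⊤}).Nonempty)
    (hJ_inf : (⨅ y : EuclideanSpace ℝ (Fin n), J y) = (0 : EReal)) :
    (∀ (x : EuclideanSpace ℝ (Fin n)) (t ε : ℝ), 0 < t → 0 < ε →
      0 < heatSol n J x t ε ∧ heatSol n J x t ε ≤ 1) ∧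
    (∀ (x : EuclideanSpace ℝ (Fin n)) (ε : ℝ), 0 < ε →
      x ∈ interior {y : EuclideanSpace ℝ (Fin n) | J y ≠ ⊤} →
      Tendsto (fun t => heatSol n J x t ε) (𝓝[>] (0 : ℝ))
        (𝓝 (Real.exp (-(J x).toReal / ε)))) ∧
    (∀ (x : EuclideanSpace ℝ (Fin n)) (ε : ℝ), 0 < ε → J x = ⊤ →
      Tendsto (fun t => heatSol n J x t ε) (𝓝[>] (0 : ℝ)) (𝓝 0)) := by
  have hJ_nonneg (y) : 0 ≤ J y := hJ_inf ▸ iInf_le J y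
  have hJ_dom : volume {y | J y ≠ ⊤} ≠ 0 := (Measure.measure_pos_of_nonempty_interior _ hJ_int).ne'
  obtain ⟨h_bounds, h_lim⟩ := heatSol_bounds_and_initial_limits_general n
    hJ_lsc.measurable.aemeasurable hJ_nonneg hJ_dom
  refine ⟨h_bounds, fun x ε hε hx => ?_, fun x ε hε hx => ?_⟩
  · rw [← boltzmannFactor_of_ne_top ε (interior_subset hx)]
    exact h_lim x ε hε (EConvex.continuousAt hJ_convex hJ_proper_bot hx)
  · simpa only [hx, boltzmannFactor_top] using
      h_lim x ε hε (continuousAt_of_lowerSemicontinuousAt_of_eq_top (hJ_lsc x) hx)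
end

section
/- For every ε > 0, the function (x,t) ↦ t^{n/2} w_ε(x,t) is jointly log-concave on ℝⁿ × (0,+∞): for all x₁, x₂ ∈ ℝⁿ, t₁, t₂ > 0 and λ ∈ (0,1), one has (λt₁+(1−λ)t₂)^{n/2} w_ε(λx₁+(1−λ)x₂, λt₁+(1−λ)t₂) ≥ (t₁^{n/2} w_ε(x₁,t₁))^λ (t₂^{n/2} w_ε(x₂,t₂))^{1−λ}. -/
open scoped Topology
open Filter MeasureTheory

/-!
By the Prékopa–Leindler inequality, integrating a jointly log-concave function over one of its
variables leaves a log-concave function of the others. The factor `t ^ (n / 2)` cancels the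
`t`-dependence of the normalization of `heatSol`, so only the integral of `heatIntegrand` is left,
and that integrand is log-concave in `(x, t, y)` because the perspective `‖z‖² / t` of the squared
norm is jointly convex.

The Prékopa–Leindler inequality on `ℝ` follows from the Brunn–Minkowski inequality
`|A + B| ≥ |A| + |B|` applied to superlevel sets: if `f` and `g` have the same supremum, then their
superlevel sets at each height are either both nonempty or both empty. By Fubini's theorem the
inequality passes to products of measures.
-/

open scoped ENNReal Pointwise

theorem volume_add_volume_le_volume_add_of_isCompact {K L : Set ℝ} (hK : IsCompact K)
    (hL : IsCompact L) (hK₀ : K.Nonempty) (hL₀ : L.Nonempty) :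
    volume K + volume L ≤ volume (K + L) := by
  obtain ⟨M, hMK, hM⟩ := hK.exists_isGreatest hK₀
  obtain ⟨m, hmL, hm⟩ := hL.exists_isLeast hL₀
  have hdisj : AEDisjoint volume (K + {m}) ({M} + L) := by
    refine measure_mono_null (t := {M + m}) ?_ (by simp)
    rintro _ ⟨⟨k, hk, m', hm', rfl⟩, M', hM', l, hl, hkl⟩
    have hkM : k ≤ M := hM hk
    have hml : m ≤ l := hm hl
    simp only [Set.mem_singleton_iff] at hm' hM' hkl ⊢
    linarith
  have hmeas : MeasurableSet ({M} + L) := (isCompact_singleton.add hL).measurableSet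
  calc volume K + volume L = volume (K + {m}) + volume ({M} + L) := by simp
    _ = volume ((K + {m}) ∪ ({M} + L)) :=
      (measure_union₀ hmeas.nullMeasurableSet hdisj).symm
    _ ≤ volume (K + L) := by
      gcongr
      exact Set.union_subset (Set.add_subset_add_left (Set.singleton_subset_iff.2 hmL))
        (Set.add_subset_add_right (Set.singleton_subset_iff.2 hMK))

theorem volume_add_volume_le_volume_add {A B : Set ℝ} (hA : MeasurableSet A)
    (hB : MeasurableSet B) (hA₀ : A.Nonempty) (hB₀ : B.Nonempty) :
    volume A + volume B ≤ volume (A + B) := by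
  obtain ⟨p, hp⟩ := hA₀
  obtain ⟨q, hq⟩ := hB₀
  rw [hA.measure_eq_iSup_isCompact, hB.measure_eq_iSup_isCompact]
  simp only [iSup_and']
  refine ENNReal.biSup_add_biSup_le' ⟨∅, by simp⟩ ⟨∅, by simp⟩ ?_
  rintro K ⟨hKA, hK⟩ L ⟨hLB, hL⟩
  calc volume K + volume L ≤ volume (insert p K) + volume (insert q L) := by
        gcongr <;> exact Set.subset_insert _ _
    _ ≤ volume (insert p K + insert q L) :=
      volume_add_volume_le_volume_add_of_isCompact (hK.insert p) (hL.insert q)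
        (Set.insert_nonempty p K) (Set.insert_nonempty q L)
    _ ≤ volume (A + B) := by
      gcongr
      exacts [Set.insert_subset hp hKA, Set.insert_subset hq hLB]

theorem volume_setOf_pos_ofReal_lt (c : ℝ≥0∞) :
    volume ({t : ℝ | ENNReal.ofReal t < c} ∩ Set.Ioi 0) = c := by
  cases c with
  | top => simp
  | coe r =>
    have : {t : ℝ | ENNReal.ofReal t < r} ∩ Set.Ioi 0 = Set.Ioo 0 (r : ℝ) := by
      ext t
      simp only [Set.mem_inter_iff, Set.mem_ofPred_eq, Set.mem_Ioi, Set.mem_Ioo]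
      rw [and_comm]
      exact and_congr_right fun ht ↦ ENNReal.ofReal_lt_coe_iff ht.le
    simp [this]

theorem lintegral_eq_lintegral_meas_ofReal_lt {α : Type*} [MeasurableSpace α] (μ : Measure α)
    [SFinite μ] {f : α → ℝ≥0∞} (hf : Measurable f) :
    ∫⁻ x, f x ∂μ = ∫⁻ t in Set.Ioi (0 : ℝ), μ {x | ENNReal.ofReal t < f x} := by
  have hS : MeasurableSet {p : α × ℝ | ENNReal.ofReal p.2 < f p.1} :=
    measurableSet_lt (by fun_prop) (by fun_prop)
  calc ∫⁻ x, f x ∂μ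
      = ∫⁻ x, volume.restrict (Set.Ioi 0) {t : ℝ | ENNReal.ofReal t < f x} ∂μ := by
        simp_rw [Measure.restrict_apply' measurableSet_Ioi, volume_setOf_pos_ofReal_lt]
    _ = μ.prod (volume.restrict (Set.Ioi 0)) {p : α × ℝ | ENNReal.ofReal p.2 < f p.1} :=
        (Measure.prod_apply hS).symm
    _ = ∫⁻ t in Set.Ioi (0 : ℝ), μ {x | ENNReal.ofReal t < f x} := Measure.prod_apply_symm hS

theorem rpow_mul_rpow_le_ofReal_mul_add_ofReal_mul {a b : ℝ} (ha : 0 < a) (hb : 0 < b)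
    (hab : a + b = 1) (p q : ℝ≥0∞) :
    p ^ a * q ^ b ≤ ENNReal.ofReal a * p + ENNReal.ofReal b * q := by
  have young := ENNReal.young_inequality (p ^ a) (q ^ b) (Real.HolderConjugate.inv_inv ha hb hab)
  simpa [← ENNReal.rpow_mul, ha.ne', hb.ne', ENNReal.ofReal_inv_of_pos, ha, hb, div_eq_mul_inv,
    mul_comm] using young

section Weights

variable {a b : ℝ}

theorem smul_setOf_lt_add_smul_setOf_lt_subset {E : Type*} [Add E] [SMul ℝ E] (ha : 0 < a)
    (hb : 0 < b) (hab : a + b = 1) {f g h : E → ℝ≥0∞}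
    (H : ∀ x y, f x ^ a * g y ^ b ≤ h (a • x + b • y)) (c : ℝ≥0∞) :
    a • {x | c < f x} + b • {x | c < g x} ⊆ {x | c < h x} := by
  rintro _ ⟨_, ⟨x, hx, rfl⟩, _, ⟨y, hy, rfl⟩, rfl⟩
  calc c = c ^ a * c ^ b := by
        rw [← ENNReal.rpow_add_of_nonneg a b ha.le hb.le, hab, ENNReal.rpow_one]
    _ < f x ^ a * g y ^ b :=
      ENNReal.mul_lt_mul (ENNReal.rpow_lt_rpow hx ha) (ENNReal.rpow_lt_rpow hy hb)
    _ ≤ h (a • x + b • y) := H x y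

theorem lintegral_add_lintegral_le_of_iSup_eq (ha : 0 < a) (hb : 0 < b) (hab : a + b = 1)
    {f g h : ℝ → ℝ≥0∞} (hf : Measurable f) (hg : Measurable g) (hh : Measurable h)
    (hfg : (⨆ x, f x) = ⨆ x, g x) (H : ∀ x y, f x ^ a * g y ^ b ≤ h (a • x + b • y)) :
    ENNReal.ofReal a * (∫⁻ x, f x) + ENNReal.ofReal b * (∫⁻ x, g x) ≤ ∫⁻ x, h x := by
  have hanti (k : ℝ → ℝ≥0∞) : Antitone fun t : ℝ ↦ volume {x | ENNReal.ofReal t < k x} :=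
    fun s t hst ↦ measure_mono fun x hx ↦ (ENNReal.ofReal_le_ofReal hst).trans_lt hx
  have hsmul {c : ℝ} (hc : 0 < c) (A : Set ℝ) :
      volume (c • A) = ENNReal.ofReal c * volume A := by
    simp [Measure.addHaar_smul, abs_of_pos hc]
  have hlevel (c : ℝ≥0∞) : ENNReal.ofReal a * volume {x | c < f x} +
      ENNReal.ofReal b * volume {x | c < g x} ≤ volume {x | c < h x} := by
    rcases lt_or_ge c (⨆ x, f x) with hc | hc
    · rw [← hsmul ha, ← hsmul hb]
      refine (volume_add_volume_le_volume_add ?_ ?_ ?_ ?_).trans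
        (measure_mono (smul_setOf_lt_add_smul_setOf_lt_subset ha hb hab H c))
      · exact (measurableSet_lt measurable_const hf).const_smul₀ a
      · exact (measurableSet_lt measurable_const hg).const_smul₀ b
      · exact Set.Nonempty.smul_set (lt_iSup_iff.1 hc)
      · exact Set.Nonempty.smul_set (lt_iSup_iff.1 (hc.trans_eq hfg))
    · have hf_empty : {x | c < f x} = ∅ := by
        simpa [Set.eq_empty_iff_forall_notMem] using hc
      have hg_empty : {x | c < g x} = ∅ := by
        simpa [hfg, Set.eq_empty_iff_forall_notMem] using hc
      simp [hf_empty, hg_empty]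
  rw [lintegral_eq_lintegral_meas_ofReal_lt _ hf, lintegral_eq_lintegral_meas_ofReal_lt _ hg,
    lintegral_eq_lintegral_meas_ofReal_lt _ hh, ← lintegral_const_mul _ (hanti f).measurable,
    ← lintegral_const_mul _ (hanti g).measurable,
    ← lintegral_add_left ((hanti f).measurable.const_mul _)]
  exact lintegral_mono fun t ↦ hlevel _

theorem lintegral_rpow_mul_lintegral_rpow_le_of_iSup_ne_top (ha : 0 < a) (hb : 0 < b)
    (hab : a + b = 1) {f g h : ℝ → ℝ≥0∞} (hf : Measurable f) (hg : Measurable g)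
    (hh : Measurable h) (hf_top : (⨆ x, f x) ≠ ∞) (hg_top : (⨆ x, g x) ≠ ∞)
    (H : ∀ x y, f x ^ a * g y ^ b ≤ h (a • x + b • y)) :
    (∫⁻ x, f x) ^ a * (∫⁻ x, g x) ^ b ≤ ∫⁻ x, h x := by
  by_cases hf_zero : (⨆ x, f x) = 0
  · simp [ENNReal.iSup_eq_zero.1 hf_zero, ha]
  by_cases hg_zero : (⨆ x, g x) = 0
  · simp [ENNReal.iSup_eq_zero.1 hg_zero, hb]
  set r := (⨆ x, f x)⁻¹
  set s := (⨆ x, g x)⁻¹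
  have hsup : (⨆ x, r * f x) = ⨆ x, s * g x := by
    rw [← ENNReal.mul_iSup, ← ENNReal.mul_iSup, ENNReal.inv_mul_cancel hf_zero hf_top,
      ENNReal.inv_mul_cancel hg_zero hg_top]
  have hscale (p q : ℝ≥0∞) : (r * p) ^ a * (s * q) ^ b = r ^ a * s ^ b * (p ^ a * q ^ b) := by
    rw [ENNReal.mul_rpow_of_nonneg _ _ ha.le, ENNReal.mul_rpow_of_nonneg _ _ hb.le,
      mul_mul_mul_comm]
  have hC_zero : r ^ a * s ^ b ≠ 0 := by simp [r, s, hf_top, hg_top, ha.le, hb.le]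
  have hC_top : r ^ a * s ^ b ≠ ∞ :=
    ENNReal.mul_ne_top (by simp [r, hf_zero, ha.le]) (by simp [s, hg_zero, hb.le])
  rw [← ENNReal.mul_le_mul_iff_right hC_zero hC_top, ← hscale]
  calc (r * ∫⁻ x, f x) ^ a * (s * ∫⁻ x, g x) ^ b
      ≤ ENNReal.ofReal a * (r * ∫⁻ x, f x) + ENNReal.ofReal b * (s * ∫⁻ x, g x) :=
        rpow_mul_rpow_le_ofReal_mul_add_ofReal_mul ha hb hab _ _
    _ = ENNReal.ofReal a * (∫⁻ x, r * f x) + ENNReal.ofReal b * (∫⁻ x, s * g x) := by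
        rw [lintegral_const_mul _ hf, lintegral_const_mul _ hg]
    _ ≤ ∫⁻ x, r ^ a * s ^ b * h x :=
        lintegral_add_lintegral_le_of_iSup_eq ha hb hab (hf.const_mul r) (hg.const_mul s)
          (hh.const_mul _) hsup fun x y ↦ (hscale _ _).trans_le (by gcongr; exact H x y)
    _ = r ^ a * s ^ b * ∫⁻ x, h x := lintegral_const_mul _ hh

end Weights

theorem lintegral_rpow_eq_iSup_lintegral_min_rpow {α : Type*} [MeasurableSpace α] (μ : Measure α)
    {f : α → ℝ≥0∞} (hf : Measurable f) {p : ℝ} (hp : 0 < p) :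
    (∫⁻ x, f x ∂μ) ^ p = ⨆ k : ℕ, (∫⁻ x, min (f x) k ∂μ) ^ p := by
  have hmono : Monotone fun (k : ℕ) x ↦ min (f x) k := fun i j hij x ↦ by
    dsimp only
    gcongr
  calc (∫⁻ x, f x ∂μ) ^ p = (∫⁻ x, ⨆ k : ℕ, min (f x) k ∂μ) ^ p := by
        simp_rw [← inf_iSup_eq, ENNReal.iSup_natCast, inf_top_eq]
    _ = (⨆ k : ℕ, ∫⁻ x, min (f x) k ∂μ) ^ p := by
        rw [lintegral_iSup (fun k ↦ by fun_prop) hmono]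
    _ = ⨆ k : ℕ, (∫⁻ x, min (f x) k ∂μ) ^ p := (ENNReal.orderIsoRpow p hp).map_iSup _

/-- The **Prékopa–Leindler inequality** for a measure `μ` on a real vector space, isolated as a
property of `μ` because it is stable under products and linear images. The functions take values in
`ℝ≥0∞`, so that no integrability is needed when it is applied to partial integrals. -/
def IsPrekopaLeindler {E : Type*} [AddCommMonoid E] [Module ℝ E] [MeasurableSpace E]
    (μ : Measure E) : Prop :=
  ∀ ⦃a b : ℝ⦄, 0 < a → 0 < b → a + b = 1 → ∀ ⦃f g h : E → ℝ≥0∞⦄,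
    Measurable f → Measurable g → Measurable h →
    (∀ x y, f x ^ a * g y ^ b ≤ h (a • x + b • y)) →
    (∫⁻ x, f x ∂μ) ^ a * (∫⁻ x, g x ∂μ) ^ b ≤ ∫⁻ x, h x ∂μ

theorem isPrekopaLeindler_volume_real : IsPrekopaLeindler (volume : Measure ℝ) := by
  intro a b ha hb hab f g h hf hg hh H
  rw [lintegral_rpow_eq_iSup_lintegral_min_rpow _ hf ha,
    lintegral_rpow_eq_iSup_lintegral_min_rpow _ hg hb]
  simp only [ENNReal.iSup_mul, ENNReal.mul_iSup]
  have htrunc (u : ℝ → ℝ≥0∞) (k : ℕ) : (⨆ x, min (u x) k) ≠ ∞ :=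
    ne_top_of_le_ne_top (ENNReal.natCast_ne_top k) (iSup_le fun x ↦ min_le_right _ _)
  refine iSup_le fun k ↦ iSup_le fun j ↦ ?_
  refine lintegral_rpow_mul_lintegral_rpow_le_of_iSup_ne_top ha hb hab (by fun_prop)
    (by fun_prop) hh (htrunc _ _) (htrunc _ _) fun x y ↦ le_trans ?_ (H x y)
  gcongr <;> exact min_le_left _ _

namespace IsPrekopaLeindler

variable {E F : Type*} [AddCommMonoid E] [Module ℝ E] [MeasurableSpace E] {μ : Measure E}
  [AddCommMonoid F] [Module ℝ F] [MeasurableSpace F] {ν : Measure F}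

theorem dirac_zero : IsPrekopaLeindler (Measure.dirac (0 : E)) := by
  intro a b _ _ _ f g h hf hg hh H
  simpa [lintegral_dirac' _ hf, lintegral_dirac' _ hg, lintegral_dirac' _ hh] using H 0 0

theorem prod [SFinite μ] [SFinite ν] (hμ : IsPrekopaLeindler μ) (hν : IsPrekopaLeindler ν) :
    IsPrekopaLeindler (μ.prod ν) := by
  intro a b ha hb hab f g h hf hg hh H
  rw [lintegral_prod _ hf.aemeasurable, lintegral_prod _ hg.aemeasurable,
    lintegral_prod _ hh.aemeasurable]
  refine hμ ha hb hab hf.lintegral_prod_right' hg.lintegral_prod_right'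
    hh.lintegral_prod_right' fun x y ↦ ?_
  exact hν ha hb hab (by fun_prop) (by fun_prop) (by fun_prop) fun u v ↦ H (x, u) (y, v)

theorem of_measurePreserving (hμ : IsPrekopaLeindler μ) {e : E → F} (he : MeasurePreserving e μ ν)
    (he_lin : IsLinearMap ℝ e) : IsPrekopaLeindler ν := by
  intro a b ha hb hab f g h hf hg hh H
  rw [← he.lintegral_comp hf, ← he.lintegral_comp hg, ← he.lintegral_comp hh]
  refine hμ ha hb hab (hf.comp he.measurable) (hg.comp he.measurable) (hh.comp he.measurable)
    fun x y ↦ ?_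
  rw [he_lin.map_add, he_lin.map_smul, he_lin.map_smul]
  exact H _ _

theorem pi {n : ℕ} {X : Fin n → Type*} [∀ i, AddCommMonoid (X i)] [∀ i, Module ℝ (X i)]
    [∀ i, MeasurableSpace (X i)] {μ : ∀ i, Measure (X i)} [∀ i, SigmaFinite (μ i)]
    (hμ : ∀ i, IsPrekopaLeindler (μ i)) : IsPrekopaLeindler (Measure.pi μ) := by
  induction n with
  | zero =>
    rw [Measure.pi_of_empty μ 0]
    exact dirac_zero
  | succ n ih =>
    refine ((hμ 0).prod (ih fun i ↦ hμ i.succ)).of_measurePreserving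
      (measurePreserving_piFinSuccAbove μ 0).symm ⟨fun x y ↦ ?_, fun c x ↦ ?_⟩ <;>
    exact funext (Fin.cases rfl fun _ ↦ rfl)

theorem integral_rpow_mul_integral_rpow_le (hμ : IsPrekopaLeindler μ) {a b : ℝ} (ha : 0 < a)
    (hb : 0 < b) (hab : a + b = 1) {f g h : E → ℝ} (hf : Measurable f) (hg : Measurable g)
    (hh : Measurable h) (hf_int : Integrable f μ) (hg_int : Integrable g μ)
    (hh_int : Integrable h μ) (hf₀ : ∀ x, 0 ≤ f x) (hg₀ : ∀ x, 0 ≤ g x) (hh₀ : ∀ x, 0 ≤ h x)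
    (H : ∀ x y, f x ^ a * g y ^ b ≤ h (a • x + b • y)) :
    (∫ x, f x ∂μ) ^ a * (∫ x, g x ∂μ) ^ b ≤ ∫ x, h x ∂μ := by
  have hofReal {p q : ℝ} (hp : 0 ≤ p) (hq : 0 ≤ q) :
      ENNReal.ofReal p ^ a * ENNReal.ofReal q ^ b = ENNReal.ofReal (p ^ a * q ^ b) := by
    rw [ENNReal.ofReal_rpow_of_nonneg hp ha.le, ENNReal.ofReal_rpow_of_nonneg hq hb.le,
      ← ENNReal.ofReal_mul (by positivity)]
  rw [← ENNReal.ofReal_le_ofReal_iff (integral_nonneg hh₀),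
    ← hofReal (integral_nonneg hf₀) (integral_nonneg hg₀),
    ofReal_integral_eq_lintegral_ofReal hf_int (.of_forall hf₀),
    ofReal_integral_eq_lintegral_ofReal hg_int (.of_forall hg₀),
    ofReal_integral_eq_lintegral_ofReal hh_int (.of_forall hh₀)]
  refine hμ ha hb hab hf.ennreal_ofReal hg.ennreal_ofReal hh.ennreal_ofReal fun x y ↦ ?_
  rw [hofReal (hf₀ x) (hg₀ y)]
  exact ENNReal.ofReal_le_ofReal (H x y)

end IsPrekopaLeindler

section InnerProductSpace

variable (E : Type*) [NormedAddCommGroup E] [InnerProductSpace ℝ E] [FiniteDimensional ℝ E]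
  [MeasurableSpace E] [BorelSpace E]

theorem isPrekopaLeindler_volume : IsPrekopaLeindler (volume : Measure E) := by
  have hpi : IsPrekopaLeindler (volume : Measure (Fin (Module.finrank ℝ E) → ℝ)) :=
    .pi fun _ ↦ isPrekopaLeindler_volume_real
  have hEuclidean := hpi.of_measurePreserving (PiLp.volume_preserving_toLp _)
    (WithLp.linearEquiv 2 ℝ _).symm.toLinearMap.isLinear
  exact hEuclidean.of_measurePreserving (stdOrthonormalBasis ℝ E).measurePreserving_repr_symm
    (stdOrthonormalBasis ℝ E).repr.symm.toLinearEquiv.toLinearMap.isLinear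

theorem integrable_exp_neg_mul_sq_norm {c : ℝ} (hc : 0 < c) :
    Integrable fun x : E ↦ Real.exp (-c * ‖x‖ ^ 2) := by
  refine .of_integral_ne_zero ?_
  rw [GaussianFourier.integral_rexp_neg_mul_sq_norm hc]
  positivity

end InnerProductSpace

theorem add_sq_div_add_le_sq_div_add_sq_div {p q s t : ℝ} (hs : 0 < s) (ht : 0 < t) :
    (p + q) ^ 2 / (s + t) ≤ p ^ 2 / s + q ^ 2 / t := by
  simpa using Finset.sq_sum_div_le_sum_sq_div Finset.univ ![p, q] (g := ![s, t])
    (by simp [Fin.forall_fin_two, hs, ht])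

theorem convexOn_sq_norm_div (E : Type*) [SeminormedAddCommGroup E] [NormedSpace ℝ E] :
    ConvexOn ℝ {p : E × ℝ | 0 < p.2} fun p ↦ ‖p.1‖ ^ 2 / p.2 := by
  refine convexOn_iff_forall_pos.2 ⟨(convex_Ioi 0).linear_preimage (LinearMap.snd ℝ E ℝ), ?_⟩
  rintro ⟨x, s⟩ (hs : 0 < s) ⟨y, t⟩ (ht : 0 < t) a b ha hb -
  calc ‖a • x + b • y‖ ^ 2 / (a * s + b * t)
      ≤ (a * ‖x‖ + b * ‖y‖) ^ 2 / (a * s + b * t) := by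
        gcongr
        simpa [norm_smul, abs_of_pos, ha, hb] using norm_add_le (a • x) (b • y)
    _ ≤ (a * ‖x‖) ^ 2 / (a * s) + (b * ‖y‖) ^ 2 / (b * t) :=
        add_sq_div_add_le_sq_div_add_sq_div (by positivity) (by positivity)
    _ = a * (‖x‖ ^ 2 / s) + b * (‖y‖ ^ 2 / t) := by field_simp

section HeatIntegrand

variable {n : ℕ} {J : EuclideanSpace ℝ (Fin n) → EReal} {t ε : ℝ}

theorem heatIntegrand_nonneg (x : EuclideanSpace ℝ (Fin n)) (t ε : ℝ)
    (y : EuclideanSpace ℝ (Fin n)) : 0 ≤ heatIntegrand n J x t ε y := by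
  unfold heatIntegrand
  split_ifs
  exacts [le_rfl, (Real.exp_pos _).le]

theorem measurable_heatIntegrand (hJ : Measurable J) (x : EuclideanSpace ℝ (Fin n)) (t ε : ℝ) :
    Measurable (heatIntegrand n J x t ε) := by
  have hquad : Measurable fun y ↦ ‖x - y‖ ^ 2 / (2 * t) := by fun_prop
  exact .ite (hJ (measurableSet_singleton ⊤)) measurable_const
    ((hquad.add hJ.ereal_toReal).div_const ε).neg.exp

theorem heatIntegrand_le_exp_mul_exp {c : ℝ} {x y : EuclideanSpace ℝ (Fin n)} (hc : c ≤ J y)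
    (hε : 0 < ε) : heatIntegrand n J x t ε y ≤
      Real.exp (-c / ε) * Real.exp (-(2 * t * ε)⁻¹ * ‖x - y‖ ^ 2) := by
  unfold heatIntegrand
  split_ifs with hy
  · positivity
  have hc' : c ≤ (J y).toReal :=
    EReal.coe_le_coe_iff.1 (hc.trans (EReal.le_coe_toReal hy))
  rw [← Real.exp_add, Real.exp_le_exp]
  calc -((‖x - y‖ ^ 2 / (2 * t) + (J y).toReal) / ε)
      ≤ -((‖x - y‖ ^ 2 / (2 * t) + c) / ε) := by gcongr
    _ = -c / ε + -(2 * t * ε)⁻¹ * ‖x - y‖ ^ 2 := by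
        rw [mul_inv]
        ring

theorem integrable_heatIntegrand (hJ : Measurable J) {c : ℝ} (hc : ∀ y, c ≤ J y)
    (x : EuclideanSpace ℝ (Fin n)) (ht : 0 < t) (hε : 0 < ε) :
    Integrable (heatIntegrand n J x t ε) := by
  have hgauss : Integrable fun y : EuclideanSpace ℝ (Fin n) ↦
      Real.exp (-c / ε) * Real.exp (-(2 * t * ε)⁻¹ * ‖x - y‖ ^ 2) :=
    ((integrable_exp_neg_mul_sq_norm _ (by positivity)).comp_sub_left x).const_mul _
  refine hgauss.mono' (measurable_heatIntegrand hJ x t ε).aestronglyMeasurable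
    (.of_forall fun y ↦ ?_)
  rw [Real.norm_of_nonneg (heatIntegrand_nonneg x t ε y)]
  exact heatIntegrand_le_exp_mul_exp (hc y) hε

theorem heatIntegrand_rpow_mul_heatIntegrand_rpow_le (hε : 0 < ε)
    {x₁ x₂ y₁ y₂ : EuclideanSpace ℝ (Fin n)} {t₁ t₂ a b : ℝ} (ht₁ : 0 < t₁) (ht₂ : 0 < t₂)
    (ha : 0 < a) (hb : 0 < b) (hab : a + b = 1) (hJ_bot : ∀ y, J y ≠ ⊥)
    (hJ : J (a • y₁ + b • y₂) ≤ a * J y₁ + b * J y₂) :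
    heatIntegrand n J x₁ t₁ ε y₁ ^ a * heatIntegrand n J x₂ t₂ ε y₂ ^ b ≤
      heatIntegrand n J (a • x₁ + b • x₂) (a * t₁ + b * t₂) ε (a • y₁ + b • y₂) := by
  by_cases hy₁ : J y₁ = ⊤
  · simpa [heatIntegrand, hy₁, ha.ne'] using heatIntegrand_nonneg _ _ _ _
  by_cases hy₂ : J y₂ = ⊤
  · simpa [heatIntegrand, hy₂, hb.ne'] using heatIntegrand_nonneg _ _ _ _
  have hJ_coe : J (a • y₁ + b • y₂) ≤ ((a * (J y₁).toReal + b * (J y₂).toReal : ℝ) : EReal) := by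
    simpa [EReal.coe_toReal, hy₁, hy₂, hJ_bot] using hJ
  have hy : J (a • y₁ + b • y₂) ≠ ⊤ := ne_top_of_le_ne_top (EReal.coe_ne_top _) hJ_coe
  have hJ_toReal : (J (a • y₁ + b • y₂)).toReal ≤ a * (J y₁).toReal + b * (J y₂).toReal :=
    EReal.toReal_le_toReal hJ_coe (hJ_bot _) (EReal.coe_ne_top _)
  have hquad : ‖a • x₁ + b • x₂ - (a • y₁ + b • y₂)‖ ^ 2 / (2 * (a * t₁ + b * t₂)) ≤
      a * (‖x₁ - y₁‖ ^ 2 / (2 * t₁)) + b * (‖x₂ - y₂‖ ^ 2 / (2 * t₂)) := by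
    rw [show a • x₁ + b • x₂ - (a • y₁ + b • y₂) = a • (x₁ - y₁) + b • (x₂ - y₂) by module,
      show 2 * (a * t₁ + b * t₂) = a * (2 * t₁) + b * (2 * t₂) by ring]
    exact (convexOn_sq_norm_div _).2 (x := (x₁ - y₁, 2 * t₁)) (y := (x₂ - y₂, 2 * t₂))
      (mul_pos two_pos ht₁) (mul_pos two_pos ht₂) ha.le hb.le hab
  simp only [heatIntegrand, hy₁, hy₂, hy, if_false]
  rw [← Real.exp_mul, ← Real.exp_mul, ← Real.exp_add, Real.exp_le_exp]
  calc -((‖x₁ - y₁‖ ^ 2 / (2 * t₁) + (J y₁).toReal) / ε) * a +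
        -((‖x₂ - y₂‖ ^ 2 / (2 * t₂) + (J y₂).toReal) / ε) * b
      = -((a * (‖x₁ - y₁‖ ^ 2 / (2 * t₁)) + b * (‖x₂ - y₂‖ ^ 2 / (2 * t₂)) +
          (a * (J y₁).toReal + b * (J y₂).toReal)) / ε) := by ring
    _ ≤ _ := by gcongr

theorem integral_heatIntegrand_rpow_mul_integral_heatIntegrand_rpow_le (hJ_meas : Measurable J)
    {c : ℝ} (hJ_ge : ∀ y, c ≤ J y) (hε : 0 < ε) (x₁ x₂ : EuclideanSpace ℝ (Fin n))
    {t₁ t₂ a b : ℝ} (ht₁ : 0 < t₁) (ht₂ : 0 < t₂) (ha : 0 < a) (hb : 0 < b) (hab : a + b = 1)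
    (hJ_convex : ∀ y₁ y₂, J (a • y₁ + b • y₂) ≤ a * J y₁ + b * J y₂) :
    (∫ y, heatIntegrand n J x₁ t₁ ε y) ^ a * (∫ y, heatIntegrand n J x₂ t₂ ε y) ^ b ≤
      ∫ y, heatIntegrand n J (a • x₁ + b • x₂) (a * t₁ + b * t₂) ε y := by
  have hJ_bot (y) : J y ≠ ⊥ := ne_bot_of_le_ne_bot (EReal.coe_ne_bot c) (hJ_ge y)
  exact (isPrekopaLeindler_volume _).integral_rpow_mul_integral_rpow_le ha hb hab
    (measurable_heatIntegrand hJ_meas x₁ t₁ ε) (measurable_heatIntegrand hJ_meas x₂ t₂ ε)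
    (measurable_heatIntegrand hJ_meas _ _ ε) (integrable_heatIntegrand hJ_meas hJ_ge x₁ ht₁ hε)
    (integrable_heatIntegrand hJ_meas hJ_ge x₂ ht₂ hε)
    (integrable_heatIntegrand hJ_meas hJ_ge _ (by positivity) hε)
    (heatIntegrand_nonneg x₁ t₁ ε) (heatIntegrand_nonneg x₂ t₂ ε) (heatIntegrand_nonneg _ _ ε)
    fun y₁ y₂ ↦ heatIntegrand_rpow_mul_heatIntegrand_rpow_le hε ht₁ ht₂ ha hb hab hJ_bot
      (hJ_convex y₁ y₂)

theorem rpow_mul_heatSol (x : EuclideanSpace ℝ (Fin n)) (ht : 0 < t) (hε : 0 < ε) :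
    t ^ ((n : ℝ) / 2) * heatSol n J x t ε =
      (2 * Real.pi * ε) ^ (-(n : ℝ) / 2) * ∫ y, heatIntegrand n J x t ε y := by
  have hconst : (2 * Real.pi * t * ε) ^ (-(n : ℝ) / 2) =
      (t ^ ((n : ℝ) / 2))⁻¹ * (2 * Real.pi * ε) ^ (-(n : ℝ) / 2) := by
    rw [show 2 * Real.pi * t * ε = t * (2 * Real.pi * ε) by ring,
      Real.mul_rpow ht.le (by positivity), neg_div, Real.rpow_neg ht.le]
  rw [heatSol, hconst, mul_assoc, mul_inv_cancel_left₀ (by positivity)]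

end HeatIntegrand

theorem heatSol_jointly_log_concave_general {n : ℕ} {J : EuclideanSpace ℝ (Fin n) → EReal}
    (hJ_meas : Measurable J) {c : ℝ} (hJ_ge : ∀ y, c ≤ J y)
    (hJ_convex : ∀ y₁ y₂ : EuclideanSpace ℝ (Fin n), ∀ a b : ℝ, 0 ≤ a → 0 ≤ b → a + b = 1 →
      J (a • y₁ + b • y₂) ≤ (a : EReal) * J y₁ + (b : EReal) * J y₂)
    {ε : ℝ} (hε : 0 < ε) (x₁ x₂ : EuclideanSpace ℝ (Fin n)) {t₁ t₂ : ℝ} (ht₁ : 0 < t₁)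
    (ht₂ : 0 < t₂) {a b : ℝ} (ha : 0 < a) (hb : 0 < b) (hab : a + b = 1) :
    (t₁ ^ ((n : ℝ) / 2) * heatSol n J x₁ t₁ ε) ^ a *
        (t₂ ^ ((n : ℝ) / 2) * heatSol n J x₂ t₂ ε) ^ b ≤
      (a * t₁ + b * t₂) ^ ((n : ℝ) / 2) *
        heatSol n J (a • x₁ + b • x₂) (a * t₁ + b * t₂) ε := by
  rw [rpow_mul_heatSol x₁ ht₁ hε, rpow_mul_heatSol x₂ ht₂ hε, rpow_mul_heatSol _ (by positivity) hε]
  set C := (2 * Real.pi * ε) ^ (-(n : ℝ) / 2)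
  have hC : 0 < C := by positivity
  have hI (x t) : 0 ≤ ∫ y, heatIntegrand n J x t ε y := integral_nonneg (heatIntegrand_nonneg x t ε)
  rw [Real.mul_rpow hC.le (hI x₁ t₁), Real.mul_rpow hC.le (hI x₂ t₂), mul_mul_mul_comm,
    ← Real.rpow_add hC, hab, Real.rpow_one]
  exact mul_le_mul_of_nonneg_left (integral_heatIntegrand_rpow_mul_integral_heatIntegrand_rpow_le
    hJ_meas hJ_ge hε x₁ x₂ ht₁ ht₂ ha hb hab fun y₁ y₂ ↦
      hJ_convex y₁ y₂ a b ha.le hb.le hab) hC.le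

/-- For every `ε > 0`, the function `(x,t) ↦ t^{n/2} w_ε(x,t)` is jointly log-concave on
`ℝⁿ × (0,∞)`: for all `x₁, x₂`, `t₁, t₂ > 0` and `λ ∈ (0,1)`,
`(λt₁+(1−λ)t₂)^{n/2} w_ε(λx₁+(1−λ)x₂, λt₁+(1−λ)t₂)
  ≥ (t₁^{n/2} w_ε(x₁,t₁))^λ (t₂^{n/2} w_ε(x₂,t₂))^{1−λ}`. -/
theorem heatSol_jointly_log_concave (n : ℕ) (hn : 1 ≤ n)
    (J : EuclideanSpace ℝ (Fin n) → EReal)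
    (hJ_proper_bot : ∀ y, J y ≠ ⊥)
    (hJ_lsc : LowerSemicontinuous J)
    (hJ_convex : ∀ y₁ y₂ : EuclideanSpace ℝ (Fin n), ∀ a b : ℝ, 0 ≤ a → 0 ≤ b → a + b = 1 →
      J (a • y₁ + b • y₂) ≤ (a : EReal) * J y₁ + (b : EReal) * J y₂)
    (hJ_int : (interior {y : EuclideanSpace ℝ (Fin n) | J y ≠ ⊤}).Nonempty)
    (hJ_inf : (⨅ y : EuclideanSpace ℝ (Fin n), J y) = (0 : EReal))
    (ε : ℝ) (hε : 0 < ε)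
    (x₁ x₂ : EuclideanSpace ℝ (Fin n)) (t₁ t₂ : ℝ) (ht₁ : 0 < t₁) (ht₂ : 0 < t₂)
    (lam : ℝ) (hlam₀ : 0 < lam) (hlam₁ : lam < 1) :
    (lam * t₁ + (1 - lam) * t₂) ^ ((n : ℝ) / 2)
        * heatSol n J (lam • x₁ + (1 - lam) • x₂) (lam * t₁ + (1 - lam) * t₂) ε
      ≥ (t₁ ^ ((n : ℝ) / 2) * heatSol n J x₁ t₁ ε) ^ lam
        * (t₂ ^ ((n : ℝ) / 2) * heatSol n J x₂ t₂ ε) ^ (1 - lam) :=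
  heatSol_jointly_log_concave_general hJ_lsc.measurable (fun y ↦ hJ_inf ▸ iInf_le J y) hJ_convex hε
    x₁ x₂ ht₁ ht₂ hlam₀ (sub_pos.2 hlam₁) (add_sub_cancel lam 1)
end

section
/- For every x ∈ ℝⁿ and t > 0, the posterior mean estimate converges to the MAP estimate in the vanishing-noise limit: lim_{ε→0⁺} u_PM(x,t,ε) = u_MAP(x,t), where u_MAP(x,t) is the unique minimizer of y ↦ ‖x−y‖²/(2t) + J(y) over ℝⁿ. -/
/-!
By strong convexity, `F y = ‖x - y‖² / (2t) + J y` has a unique minimizer `u`, around which it grows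
quadratically: `F y ≥ F u + ‖y - u‖² / (2t)`. The posterior mean is the barycenter of Lebesgue
measure on `dom J` tilted by `-F / ε`, and by Laplace's principle these probability measures
concentrate at `u`. Indeed, at points where `F ≥ F u + η` the unnormalized density is at most
`exp (-(F u + η) / ε)`, while the normalizing constant is at least
`vol {F ≤ F u + η / 2} * exp (-(F u + η / 2) / ε)`. That sublevel set has positive volume even if
`u` lies on the boundary of `dom J`: moving from `u` towards an interior point of the convex set
`dom J` enters the interior at once and raises `F` arbitrarily little.
-/

open scoped Topology
open Filter MeasureTheory

/-- The partition function `Z_J(x,t,ε) = ∫ exp(−(‖x−y‖²/(2t) + J(y))/ε) dy`. -/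
noncomputable def partitionFn (n : ℕ) (J : EuclideanSpace ℝ (Fin n) → EReal)
    (x : EuclideanSpace ℝ (Fin n)) (t ε : ℝ) : ℝ :=
  ∫ y, heatIntegrand n J x t ε y

/-- The posterior mean estimate `u_PM(x,t,ε) = E_J[y]`. -/
noncomputable def postMean (n : ℕ) (J : EuclideanSpace ℝ (Fin n) → EReal)
    (x : EuclideanSpace ℝ (Fin n)) (t ε : ℝ) : EuclideanSpace ℝ (Fin n) :=
  (partitionFn n J x t ε)⁻¹ • ∫ y, heatIntegrand n J x t ε y • y

section StrongConvexity

variable {E : Type*} [NormedAddCommGroup E] [NormedSpace ℝ E] {s : Set E} {f : E → ℝ} {m : ℝ}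

theorem add_sq_norm_sub_le_of_strongConvexOn_of_isMinOn {u y : E} (hf : StrongConvexOn s m f)
    (hu : u ∈ s) (hmin : IsMinOn f s u) (hy : y ∈ s) :
    f u + m / 2 * ‖y - u‖ ^ 2 ≤ f y := by
  have hlim : Tendsto (fun a : ℝ => f u + (1 - a) * (m / 2 * ‖y - u‖ ^ 2)) (𝓝[>] 0)
      (𝓝 (f u + (1 - 0) * (m / 2 * ‖y - u‖ ^ 2))) :=
    (Continuous.tendsto (by fun_prop) 0).mono_left nhdsWithin_le_nhds
  rw [sub_zero, one_mul] at hlim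
  refine le_of_tendsto hlim ?_
  filter_upwards [Ioo_mem_nhdsGT zero_lt_one] with a ⟨ha0, ha1⟩
  have hsegment := hf.2 hy hu ha0.le (sub_nonneg.2 ha1.le) (add_sub_cancel a 1)
  have hle : f u ≤ f (a • y + (1 - a) • u) :=
    hmin (hf.1 hy hu ha0.le (sub_nonneg.2 ha1.le) (add_sub_cancel a 1))
  rw [smul_eq_mul, smul_eq_mul] at hsegment
  refine le_of_mul_le_mul_left ?_ ha0
  linarith

theorem isBounded_sublevel_of_strongConvexOn {y₀ : E} {b : ℝ} (hf : StrongConvexOn s m f)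
    (hm : 0 < m) (hy₀ : y₀ ∈ s) (hb : ∀ y ∈ s ∩ Metric.closedBall y₀ 1, b ≤ f y) (c : ℝ) :
    Bornology.IsBounded {y ∈ s | f y ≤ c} := by
  refine (Metric.isBounded_closedBall (x := y₀)
    (r := 1 + (|f y₀| + |c| - b) / (m / 2))).subset fun y ⟨hys, hyc⟩ => ?_
  have hb₀ : b ≤ |f y₀| := (hb y₀ ⟨hy₀, by simp⟩).trans (le_abs_self _)
  rw [Metric.mem_closedBall, dist_eq_norm]
  set r := ‖y - y₀‖ with hr
  rcases le_or_gt r 1 with hr1 | hr1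
  · have : 0 ≤ (|f y₀| + |c| - b) / (m / 2) :=
      div_nonneg (by linarith [abs_nonneg c]) (by positivity)
    linarith
  have hr0 : 0 < r := by linarith
  -- Compare with the point of the segment from `y₀` to `y` at distance `1` from `y₀`.
  have hinv : r⁻¹ ≤ 1 := inv_le_one_of_one_le₀ hr1.le
  have hcomb : r⁻¹ • y + (1 - r⁻¹) • y₀ ∈ s ∩ Metric.closedBall y₀ 1 := by
    refine ⟨hf.1 hys hy₀ (inv_nonneg.2 hr0.le) (sub_nonneg.2 hinv) (add_sub_cancel _ _), ?_⟩
    have : r⁻¹ • y + (1 - r⁻¹) • y₀ - y₀ = r⁻¹ • (y - y₀) := by module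
    rw [Metric.mem_closedBall, dist_eq_norm, this, norm_smul, Real.norm_of_nonneg (by positivity),
      inv_mul_cancel₀ hr0.ne']
  have hsegment := hf.2 hys hy₀ (inv_nonneg.2 hr0.le) (sub_nonneg.2 hinv) (add_sub_cancel _ _)
  have hgain : r⁻¹ * (1 - r⁻¹) * (m / 2 * r ^ 2) = (r - 1) * (m / 2) := by field_simp
  rw [smul_eq_mul, smul_eq_mul, ← hr, hgain] at hsegment
  have hfy : r⁻¹ * f y ≤ |c| :=
    calc r⁻¹ * f y ≤ r⁻¹ * |c| := by gcongr; exact hyc.trans (le_abs_self c)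
      _ ≤ |c| := mul_le_of_le_one_left (abs_nonneg c) hinv
  have hfy₀ : (1 - r⁻¹) * f y₀ ≤ |f y₀| :=
    calc (1 - r⁻¹) * f y₀ ≤ (1 - r⁻¹) * |f y₀| :=
          mul_le_mul_of_nonneg_left (le_abs_self _) (by linarith)
      _ ≤ |f y₀| := mul_le_of_le_one_left (abs_nonneg _) (by linarith [inv_pos.2 hr0])
  rw [← sub_le_iff_le_add', le_div_iff₀ (by positivity)]
  linarith [hb _ hcomb]

end StrongConvexity

section ExtendedReal

variable {X : Type*}

/-- The effective domain of an extended-real-valued function. An extended-real-valued convex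
function `F` that never takes the value `-∞` is encoded as the real-valued function
`fun x ↦ (F x).toReal` restricted to this set, outside of which `toReal` is a junk value. -/
def effectiveDomain (F : X → EReal) : Set X := {x | F x ≠ ⊤}

theorem coe_toReal_of_mem_effectiveDomain {F : X → EReal} (hbot : ∀ x, F x ≠ ⊥) {x : X}
    (hx : x ∈ effectiveDomain F) : ((F x).toReal : EReal) = F x :=
  EReal.coe_toReal hx (hbot x)

theorem mem_effectiveDomain_of_forall_le {F : X → EReal} (hne : (effectiveDomain F).Nonempty)
    {u : X} (hu : ∀ x, F u ≤ F x) : u ∈ effectiveDomain F :=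
  let ⟨x, hx⟩ := hne
  ne_top_of_le_ne_top hx (hu x)

theorem isMinOn_toReal_of_forall_le {F : X → EReal} (hbot : ∀ x, F x ≠ ⊥) {u : X}
    (hu : ∀ x, F u ≤ F x) : IsMinOn (fun x => (F x).toReal) (effectiveDomain F) u :=
  fun x hx => EReal.toReal_le_toReal (hu x) (hbot u) hx

theorem exists_real_forall_mem_le_of_lowerSemicontinuousOn [TopologicalSpace X] {F : X → EReal}
    {K : Set X} (hF : LowerSemicontinuousOn F K) (hK : IsCompact K) (hbot : ∀ x ∈ K, F x ≠ ⊥) :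
    ∃ b : ℝ, ∀ x ∈ K, (b : EReal) ≤ F x := by
  rcases K.eq_empty_or_nonempty with rfl | hne
  · exact ⟨0, by simp⟩
  obtain ⟨w, hw, hmin⟩ := hF.exists_isMinOn hne hK
  obtain ⟨b, -, hb⟩ := EReal.lt_iff_exists_real_btwn.1 (bot_lt_iff_ne_bot.2 (hbot w hw))
  exact ⟨b, fun x hx => hb.le.trans (hmin hx)⟩

theorem exists_forall_le_of_isBounded_sublevel [PseudoMetricSpace X] [ProperSpace X] {β : Type*}
    [LinearOrder β] {F : X → β} (hF : LowerSemicontinuous F) {x₀ : X}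
    (hb : Bornology.IsBounded {x | F x ≤ F x₀}) : ∃ u, ∀ x, F u ≤ F x := by
  have hcompact : IsCompact {x | F x ≤ F x₀} :=
    Metric.isCompact_of_isClosed_isBounded (hF.isClosed_preimage (F x₀)) hb
  obtain ⟨u, hu, hmin⟩ := (hF.lowerSemicontinuousOn _).exists_isMinOn ⟨x₀, le_refl (F x₀)⟩ hcompact
  refine ⟨u, fun x => ?_⟩
  rcases le_total (F x) (F x₀) with hx | hx
  · exact hmin hx
  · exact le_trans hu hx

theorem convexOn_toReal_of_forall_le [AddCommGroup X] [Module ℝ X] {F : X → EReal}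
    (hbot : ∀ x, F x ≠ ⊥)
    (hF : ∀ x y : X, ∀ a b : ℝ, 0 ≤ a → 0 ≤ b → a + b = 1 →
      F (a • x + b • y) ≤ (a : EReal) * F x + (b : EReal) * F y) :
    ConvexOn ℝ (effectiveDomain F) fun x => (F x).toReal := by
  have hle : ∀ x ∈ effectiveDomain F, ∀ y ∈ effectiveDomain F, ∀ a b : ℝ, 0 ≤ a → 0 ≤ b →
      a + b = 1 → F (a • x + b • y) ≤ ((a * (F x).toReal + b * (F y).toReal : ℝ) : EReal) := by
    intro x hx y hy a b ha hb hab
    rw [EReal.coe_add, EReal.coe_mul, EReal.coe_mul, coe_toReal_of_mem_effectiveDomain hbot hx,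
      coe_toReal_of_mem_effectiveDomain hbot hy]
    exact hF x y a b ha hb hab
  refine ⟨fun x hx y hy a b ha hb hab => ?_, fun x hx y hy a b ha hb hab => ?_⟩
  · exact ne_top_of_le_ne_top (EReal.coe_ne_top _) (hle x hx y hy a b ha hb hab)
  · exact EReal.toReal_le_toReal (hle x hx y hy a b ha hb hab) (hbot _) (EReal.coe_ne_top _)

variable [NormedAddCommGroup X] [NormedSpace ℝ X] {F : X → EReal} {m : ℝ}

theorem exists_forall_le_of_strongConvexOn_toReal [ProperSpace X] (hbot : ∀ x, F x ≠ ⊥)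
    (hlsc : LowerSemicontinuous F) (hne : (effectiveDomain F).Nonempty) (hm : 0 < m)
    (hF : StrongConvexOn (effectiveDomain F) m fun x => (F x).toReal) :
    ∃ u, ∀ x, F u ≤ F x := by
  obtain ⟨x₀, hx₀⟩ := hne
  obtain ⟨b, hb⟩ := exists_real_forall_mem_le_of_lowerSemicontinuousOn
    (hlsc.lowerSemicontinuousOn _) (isCompact_closedBall x₀ 1) fun x _ => hbot x
  have hb' : ∀ x ∈ effectiveDomain F ∩ Metric.closedBall x₀ 1, b ≤ (F x).toReal := fun x hx =>
    EReal.coe_le_coe_iff.1 <|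
      (hb x hx.2).trans_eq (coe_toReal_of_mem_effectiveDomain hbot hx.1).symm
  refine exists_forall_le_of_isBounded_sublevel hlsc (x₀ := x₀) <|
    (isBounded_sublevel_of_strongConvexOn hF hm hx₀ hb' (F x₀).toReal).subset fun x hx => ?_
  exact ⟨ne_top_of_le_ne_top hx₀ hx, EReal.toReal_le_toReal hx (hbot x) hx₀⟩

theorem eq_of_forall_le_of_strongConvexOn_toReal (hbot : ∀ x, F x ≠ ⊥)
    (hne : (effectiveDomain F).Nonempty) (hm : 0 < m)
    (hF : StrongConvexOn (effectiveDomain F) m fun x => (F x).toReal) {u v : X}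
    (hu : ∀ x, F u ≤ F x) (hv : ∀ x, F v ≤ F x) : u = v :=
  (hF.strictConvexOn hm).eq_of_isMinOn (isMinOn_toReal_of_forall_le hbot hu)
    (isMinOn_toReal_of_forall_le hbot hv) (mem_effectiveDomain_of_forall_le hne hu)
    (mem_effectiveDomain_of_forall_le hne hv)

end ExtendedReal

section LaplacePrinciple

variable {X : Type*} [MeasurableSpace X] {μ : Measure X} {f : X → ℝ}

theorem measureReal_mul_exp_neg_le_integral_exp_neg {k : ℝ} (hk : 0 < k)
    (hint : Integrable (fun x => Real.exp (-(k * f x))) μ) (b : ℝ) :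
    μ.real {x | f x ≤ b} * Real.exp (-(k * b)) ≤ ∫ x, Real.exp (-(k * f x)) ∂μ := by
  have hset : {x | Real.exp (-(k * b)) ≤ Real.exp (-(k * f x))} = {x | f x ≤ b} := by
    ext x
    simp [hk]
  have hmarkov := mul_meas_ge_le_integral_of_nonneg
    (Eventually.of_forall fun x => (Real.exp_pos (-(k * f x))).le) hint (Real.exp (-(k * b)))
  rwa [hset, mul_comm] at hmarkov

theorem integrable_exp_neg_mul_of_ae_le [IsFiniteMeasure μ] (hf : AEMeasurable f μ) {c k : ℝ}
    (hc : ∀ᵐ x ∂μ, c ≤ f x) (hk : 0 ≤ k) : Integrable (fun x => Real.exp (-(k * f x))) μ := by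
  refine .of_bound (by fun_prop) (Real.exp (-(k * c))) ?_
  filter_upwards [hc] with x hx
  rw [Real.norm_of_nonneg (Real.exp_pos _).le]
  gcongr

theorem tendstoUniformlyOn_exp_neg_div_integral [IsFiniteMeasure μ] (hf : AEMeasurable f μ)
    {c η : ℝ} (hc : ∀ᵐ x ∂μ, c ≤ f x) (hη : 0 < η) (hpos : 0 < μ {x | f x ≤ c + η / 2})
    {s : Set X} (hs : ∀ x ∈ s, c + η ≤ f x) :
    TendstoUniformlyOn (fun k x => Real.exp (-(k * f x)) / ∫ y, Real.exp (-(k * f y)) ∂μ) 0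
      atTop s := by
  set M := μ.real {x | f x ≤ c + η / 2}
  have hM : 0 < M := ENNReal.toReal_pos hpos.ne' (measure_ne_top _ _)
  have hlim : Tendsto (fun k : ℝ => M⁻¹ * Real.exp (-(η / 2 * k))) atTop (𝓝 (M⁻¹ * 0)) :=
    (Real.tendsto_exp_neg_atTop_nhds_zero.comp
      (tendsto_id.const_mul_atTop (half_pos hη))).const_mul _
  rw [mul_zero] at hlim
  rw [Metric.tendstoUniformlyOn_iff]
  intro r hr
  filter_upwards [hlim.eventually_lt_const hr, eventually_gt_atTop 0] with k hkr hk x hx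
  have hZ := measureReal_mul_exp_neg_le_integral_exp_neg hk
    (integrable_exp_neg_mul_of_ae_le hf hc hk.le) (c + η / 2)
  rw [Pi.zero_apply, dist_zero_left, Real.norm_of_nonneg (by positivity)]
  calc Real.exp (-(k * f x)) / ∫ y, Real.exp (-(k * f y)) ∂μ
      ≤ Real.exp (-(k * (c + η))) / (M * Real.exp (-(k * (c + η / 2)))) := by
        gcongr
        exact hs x hx
    _ = M⁻¹ * Real.exp (-(η / 2 * k)) := by
        rw [div_eq_iff (by positivity), mul_mul_mul_comm, inv_mul_cancel₀ hM.ne', one_mul,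
          ← Real.exp_add]
        ring_nf
    _ < r := hkr

variable [TopologicalSpace X] [BorelSpace X] {V : Type*} [NormedAddCommGroup V] [NormedSpace ℝ V]
  [CompleteSpace V]
  {s : Set X} {c : ℝ} {x₀ : X} {g : X → V} {a : V}

theorem tendsto_integral_tilted_of_isFiniteMeasure [IsFiniteMeasure μ] (hs : MeasurableSet s)
    (hμs : ∀ᵐ x ∂μ, x ∈ s) (hf : AEMeasurable f μ) (hc : ∀ x ∈ s, c ≤ f x)
    (hsep : ∀ U ∈ 𝓝 x₀, ∃ η > 0, ∀ x ∈ s \ U, c + η ≤ f x)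
    (hpos : ∀ η > 0, 0 < μ {x | f x ≤ c + η}) (hg : Integrable g μ)
    (hga : Tendsto g (𝓝[s] x₀) (𝓝 a)) :
    Tendsto (fun k : ℝ => ∫ x, g x ∂μ.tilted fun x => -(k * f x)) atTop (𝓝 a) := by
  have hμ : μ.restrict s = μ := Measure.restrict_eq_self_of_ae_mem hμs
  have hc' : ∀ᵐ x ∂μ, c ≤ f x := hμs.mono hc
  have : NeZero μ := ⟨fun h => (hpos 1 one_pos).ne' (by simp [h])⟩
  have hpeak := tendsto_setIntegral_peak_smul_of_integrableOn_of_tendsto (μ := μ) (l := atTop)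
    (φ := fun k x => Real.exp (-(k * f x)) / ∫ y, Real.exp (-(k * f y)) ∂μ)
    hs hs subset_rfl self_mem_nhdsWithin (measure_ne_top μ s)
    (Eventually.of_forall fun k x _ => by positivity) ?_ ?_
    (Eventually.of_forall fun k => by rw [hμ]; fun_prop) hg.integrableOn hga
  · simpa only [hμ, integral_tilted] using hpeak
  · intro U hU hx₀
    obtain ⟨η, hη, hfη⟩ := hsep U (hU.mem_nhds hx₀)
    exact tendstoUniformlyOn_exp_neg_div_integral hf hc' hη (hpos _ (half_pos hη)) hfη
  · refine tendsto_const_nhds.congr' ?_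
    filter_upwards [eventually_ge_atTop 0] with k hk
    rw [hμ, integral_div, div_self]
    exact (integral_exp_pos (integrable_exp_neg_mul_of_ae_le hf hc' hk)).ne'

theorem tendsto_integral_tilted_of_integrable_exp_neg (hs : MeasurableSet s)
    (hμs : ∀ᵐ x ∂μ, x ∈ s) (hint : Integrable (fun x => Real.exp (-f x)) μ)
    (hc : ∀ x ∈ s, c ≤ f x) (hsep : ∀ U ∈ 𝓝 x₀, ∃ η > 0, ∀ x ∈ s \ U, c + η ≤ f x)
    (hpos : ∀ η > 0, 0 < μ {x | f x ≤ c + η})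
    (hg : Integrable (fun x => Real.exp (-f x) • g x) μ) (hga : Tendsto g (𝓝[s] x₀) (𝓝 a)) :
    Tendsto (fun k : ℝ => ∫ x, g x ∂μ.tilted fun x => -(k * f x)) atTop (𝓝 a) := by
  have hf : AEMeasurable f μ := by
    simpa only [Pi.neg_def, neg_neg] using
      (Real.aemeasurable_of_aemeasurable_exp hint.1.aemeasurable).neg
  -- One tilt by `-f` produces a finite measure; tilt that one further by `-(k - 1) f`.
  have htilted : Tendsto (fun k : ℝ => ∫ x, g x ∂(μ.tilted fun x => -f x).tilted
      fun x => -(k * f x)) atTop (𝓝 a) :=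
    tendsto_integral_tilted_of_isFiniteMeasure hs (tilted_absolutelyContinuous μ _ hμs)
      (hf.mono_ac (tilted_absolutelyContinuous μ _)) hc hsep
      (fun η hη => pos_iff_ne_zero.2 fun h =>
        (hpos η hη).ne' (absolutelyContinuous_tilted hint h))
      ((integrable_tilted_iff hint g).2 hg) hga
  refine (htilted.comp (tendsto_atTop_add_const_right atTop (-1) tendsto_id)).congr fun k => ?_
  rw [Function.comp_apply, tilted_tilted hint]
  congr 2 with x
  simp only [id, Pi.add_apply]
  ring

end LaplacePrinciple

section GibbsMean

variable {E : Type*} [NormedAddCommGroup E] [MeasurableSpace E]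

theorem measure_sublevel_pos_of_convexOn [NormedSpace ℝ E] [FiniteDimensional ℝ E]
    {μ : Measure E} [μ.IsOpenPosMeasure] {s : Set E} {f : E → ℝ} (hf : ConvexOn ℝ s f)
    (hs : (interior s).Nonempty) {u : E} (hu : u ∈ s) {η : ℝ} (hη : 0 < η) :
    0 < μ (interior s ∩ {y | f y ≤ f u + η}) := by
  obtain ⟨w, hw⟩ := hs
  have hopen : IsOpen (interior s ∩ f ⁻¹' Set.Iio (f u + η)) :=
    hf.continuousOn_interior.isOpen_inter_preimage isOpen_interior isOpen_Iio
  suffices hne : (interior s ∩ f ⁻¹' Set.Iio (f u + η)).Nonempty from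
    (hopen.measure_pos μ hne).trans_le <|
      measure_mono <| Set.inter_subset_inter_right _ fun y (hy : f y < f u + η) => hy.le
  have hlim : Tendsto (fun a : ℝ => (1 - a) * f u + a * f w) (𝓝[>] 0)
      (𝓝 ((1 - 0) * f u + 0 * f w)) :=
    (Continuous.tendsto (by fun_prop) 0).mono_left nhdsWithin_le_nhds
  have hlt : (1 - 0) * f u + 0 * f w < f u + η := by linarith
  obtain ⟨a, ha, ha0, ha1⟩ :=
    ((hlim.eventually_lt_const hlt).and (Ioo_mem_nhdsGT zero_lt_one)).exists
  refine ⟨(1 - a) • u + a • w, ?_, ?_⟩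
  · exact hf.1.combo_self_interior_mem_interior hu hw (sub_nonneg.2 ha1.le) ha0 (by ring)
  · exact (hf.2 hu (interior_subset hw) (sub_nonneg.2 ha1.le) ha0.le (by ring)).trans_lt ha

variable [BorelSpace E] [InnerProductSpace ℝ E] [FiniteDimensional ℝ E]

theorem integrable_exp_neg_mul_sq_norm_sub {c : ℝ} (hc : 0 < c) (u : E) :
    Integrable fun y : E => Real.exp (-(c * ‖y - u‖ ^ 2)) := by
  have hgauss := (GaussianFourier.integrable_cexp_neg_mul_sq_norm_add (V := E) (b := (c : ℂ))
    (by simpa using hc) 0 0).norm.comp_sub_right u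
  refine hgauss.congr (Eventually.of_forall fun y => ?_)
  simp [Complex.norm_exp, ← Complex.ofReal_pow]

theorem mul_exp_neg_mul_sq_le {c : ℝ} (hc : 0 < c) (r : ℝ) :
    r * Real.exp (-(c * r ^ 2)) ≤ (1 + c⁻¹) * Real.exp (-(c / 2 * r ^ 2)) := by
  have hr : r ≤ (1 + c⁻¹) * Real.exp (c / 2 * r ^ 2) :=
    calc r ≤ (1 + r ^ 2) / 2 := by linarith [two_mul_le_add_sq 1 r]
      _ ≤ 1 + c⁻¹ + c / 2 * r ^ 2 + r ^ 2 / 2 := by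
        have : 0 < c⁻¹ := inv_pos.2 hc
        have : 0 ≤ c / 2 * r ^ 2 := by positivity
        linarith
      _ = (1 + c⁻¹) * (c / 2 * r ^ 2 + 1) := by field_simp; ring
      _ ≤ (1 + c⁻¹) * Real.exp (c / 2 * r ^ 2) := by gcongr; exact Real.add_one_le_exp _
  calc r * Real.exp (-(c * r ^ 2))
      ≤ (1 + c⁻¹) * Real.exp (c / 2 * r ^ 2) * Real.exp (-(c * r ^ 2)) := by gcongr
    _ = (1 + c⁻¹) * Real.exp (-(c / 2 * r ^ 2)) := by
      rw [mul_assoc, ← Real.exp_add]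
      ring_nf

variable {s : Set E} {f : E → ℝ} {b c : ℝ} {u : E}

theorem integrableOn_exp_neg_of_quadratic_growth (hc : 0 < c)
    (hf : AEMeasurable f (volume.restrict s))
    (hle : ∀ᵐ y ∂volume.restrict s, b + c * ‖y - u‖ ^ 2 ≤ f y) :
    IntegrableOn (fun y => Real.exp (-f y)) s := by
  refine ((integrable_exp_neg_mul_sq_norm_sub hc u).integrableOn.const_mul (Real.exp (-b))).mono'
    (by fun_prop) ?_
  filter_upwards [hle] with y hy
  rw [Real.norm_of_nonneg (Real.exp_pos _).le, ← Real.exp_add, Real.exp_le_exp]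
  linarith

theorem integrableOn_exp_neg_smul_of_quadratic_growth (hc : 0 < c)
    (hf : AEMeasurable f (volume.restrict s))
    (hle : ∀ᵐ y ∂volume.restrict s, b + c * ‖y - u‖ ^ 2 ≤ f y) :
    IntegrableOn (fun y => Real.exp (-f y) • y) s := by
  have hsub : IntegrableOn (fun y => Real.exp (-f y) • (y - u)) s := by
    refine ((integrable_exp_neg_mul_sq_norm_sub (half_pos hc) u).integrableOn.const_mul
      (Real.exp (-b) * (1 + c⁻¹))).mono' (by fun_prop) ?_
    filter_upwards [hle] with y hy
    rw [norm_smul, Real.norm_of_nonneg (Real.exp_pos _).le]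
    calc Real.exp (-f y) * ‖y - u‖
        ≤ Real.exp (-(b + c * ‖y - u‖ ^ 2)) * ‖y - u‖ := by gcongr
      _ = Real.exp (-b) * (‖y - u‖ * Real.exp (-(c * ‖y - u‖ ^ 2))) := by
        rw [neg_add, Real.exp_add]
        ring
      _ ≤ Real.exp (-b) * ((1 + c⁻¹) * Real.exp (-(c / 2 * ‖y - u‖ ^ 2))) := by
        exact mul_le_mul_of_nonneg_left (mul_exp_neg_mul_sq_le hc _) (Real.exp_pos _).le
      _ = Real.exp (-b) * (1 + c⁻¹) * Real.exp (-(c / 2 * ‖y - u‖ ^ 2)) := by ring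
  refine (hsub.add ((integrableOn_exp_neg_of_quadratic_growth hc hf hle).smul_const u)).congr_fun_ae
    (Eventually.of_forall fun y => ?_)
  simp only [Pi.add_apply]
  module

theorem tendsto_integral_tilted_of_strongConvexOn {m : ℝ} (hm : 0 < m)
    (hf : StrongConvexOn s m f) (hs : (interior s).Nonempty) (hu : u ∈ s)
    (hmin : IsMinOn f s u) :
    Tendsto (fun ε : ℝ => ∫ y, y ∂(volume.restrict s).tilted fun y => -(f y / ε)) (𝓝[>] 0)
      (𝓝 u) := by
  have hconv : ConvexOn ℝ s f := (hf.strictConvexOn hm).convexOn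
  have hgrowth : ∀ y ∈ interior s, f u + m / 2 * ‖y - u‖ ^ 2 ≤ f y := fun y hy =>
    add_sq_norm_sub_le_of_strongConvexOn_of_isMinOn hf hu hmin (interior_subset hy)
  have hgrowth_ae : ∀ᵐ y ∂volume.restrict (interior s), f u + m / 2 * ‖y - u‖ ^ 2 ≤ f y :=
    ae_restrict_of_forall_mem measurableSet_interior hgrowth
  have hmeas : AEMeasurable f (volume.restrict (interior s)) :=
    hconv.continuousOn_interior.aemeasurable measurableSet_interior
  have hsep : ∀ U ∈ 𝓝 u, ∃ η > 0, ∀ y ∈ interior s \ U, f u + η ≤ f y := by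
    intro U hU
    obtain ⟨δ, hδ, hball⟩ := Metric.mem_nhds_iff.1 hU
    refine ⟨m / 2 * δ ^ 2, by positivity, fun y ⟨hy, hyU⟩ => le_trans ?_ (hgrowth y hy)⟩
    have hδy : δ ≤ ‖y - u‖ := by
      rw [← dist_eq_norm]
      exact not_lt.1 fun h => hyU (hball h)
    gcongr
  have hpos : ∀ η > 0, 0 < volume.restrict (interior s) {y | f y ≤ f u + η} := fun η hη => by
    rw [Measure.restrict_apply' measurableSet_interior, Set.inter_comm]
    exact measure_sublevel_pos_of_convexOn hconv hs hu hη
  have hlaplace := tendsto_integral_tilted_of_integrable_exp_neg measurableSet_interior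
    (ae_restrict_mem measurableSet_interior)
    (integrableOn_exp_neg_of_quadratic_growth (half_pos hm) hmeas hgrowth_ae)
    (fun y hy => hmin (interior_subset hy)) hsep hpos
    (integrableOn_exp_neg_smul_of_quadratic_growth (half_pos hm) hmeas hgrowth_ae)
    (tendsto_id.mono_left nhdsWithin_le_nhds)
  rw [← Measure.restrict_congr_set
    (interior_ae_eq_of_null_frontier (hconv.1.addHaar_frontier volume))]
  simpa only [Function.comp_def, inv_mul_eq_div, id] using hlaplace.comp tendsto_inv_nhdsGT_zero

end GibbsMean

section PosteriorMean

/-- The objective `y ↦ ‖x - y‖² / (2t) + J y` of maximum a posteriori estimation, whose minimizer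
is the MAP estimate. -/
noncomputable def mapObjective {E : Type*} [NormedAddCommGroup E] (J : E → EReal) (x : E) (t : ℝ)
    (y : E) : EReal :=
  ((‖x - y‖ ^ 2 / (2 * t) : ℝ) : EReal) + J y

section NormedGroup

variable {E : Type*} [NormedAddCommGroup E] {J : E → EReal} {x : E} {t : ℝ}

theorem mapObjective_ne_bot (hbot : ∀ y, J y ≠ ⊥) (y : E) : mapObjective J x t y ≠ ⊥ := by
  simp [mapObjective, EReal.add_eq_bot_iff, hbot y]

theorem effectiveDomain_mapObjective :
    effectiveDomain (mapObjective J x t) = effectiveDomain J := by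
  ext y
  exact EReal.add_ne_top_iff_ne_top_right (EReal.coe_ne_bot _) (EReal.coe_ne_top _)

theorem toReal_mapObjective (hbot : ∀ y, J y ≠ ⊥) {y : E} (hy : y ∈ effectiveDomain J) :
    (mapObjective J x t y).toReal = ‖x - y‖ ^ 2 / (2 * t) + (J y).toReal := by
  rw [mapObjective, EReal.toReal_add (EReal.coe_ne_top _) (EReal.coe_ne_bot _) hy (hbot y),
    EReal.toReal_coe]

theorem lowerSemicontinuous_mapObjective (hJ : LowerSemicontinuous J) :
    LowerSemicontinuous (mapObjective J x t) := by
  have hquad : Continuous fun y => ((‖x - y‖ ^ 2 / (2 * t) : ℝ) : EReal) :=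
    continuous_coe_real_ereal.comp (by fun_prop)
  exact hquad.lowerSemicontinuous.add' hJ fun y =>
    EReal.continuousAt_add (.inl (EReal.coe_ne_top _)) (.inl (EReal.coe_ne_bot _))

end NormedGroup

theorem strongConvexOn_toReal_mapObjective {E : Type*} [NormedAddCommGroup E]
    [InnerProductSpace ℝ E] {J : E → EReal} {x : E} {t : ℝ} (hbot : ∀ y, J y ≠ ⊥)
    (hJ : ConvexOn ℝ (effectiveDomain J) fun y => (J y).toReal) :
    StrongConvexOn (effectiveDomain (mapObjective J x t)) t⁻¹
      fun y => (mapObjective J x t y).toReal := by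
  rw [effectiveDomain_mapObjective, strongConvexOn_iff_convex]
  have haffine : ConvexOn ℝ (effectiveDomain J) fun y =>
      t⁻¹ / 2 * ‖x‖ ^ 2 + innerₗ E (-t⁻¹ • x) y :=
    (convexOn_const _ hJ.1).add ((innerₗ E (-t⁻¹ • x)).convexOn hJ.1)
  refine (hJ.add haffine).congr fun y hy => ?_
  simp only [Pi.add_apply, innerₗ_apply_apply, inner_smul_left, toReal_mapObjective hbot hy,
    norm_sub_sq_real, conj_trivial]
  ring

variable {n : ℕ} {J : EuclideanSpace ℝ (Fin n) → EReal} {x : EuclideanSpace ℝ (Fin n)} {t : ℝ}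

theorem heatIntegrand_eq_indicator (hbot : ∀ y, J y ≠ ⊥) (ε : ℝ) :
    heatIntegrand n J x t ε = (effectiveDomain J).indicator fun y =>
      Real.exp (-((mapObjective J x t y).toReal / ε)) := by
  funext y
  by_cases hy : y ∈ effectiveDomain J
  · rw [Set.indicator_of_mem hy, toReal_mapObjective hbot hy, heatIntegrand, if_neg hy]
  · rw [Set.indicator_of_notMem hy, heatIntegrand, if_pos (not_not.1 hy)]

theorem postMean_eq_integral_tilted (hbot : ∀ y, J y ≠ ⊥)
    (hdom : NullMeasurableSet (effectiveDomain J)) (ε : ℝ) :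
    postMean n J x t ε = ∫ y, y ∂(volume.restrict (effectiveDomain J)).tilted
      fun y => -((mapObjective J x t y).toReal / ε) := by
  rw [postMean, partitionFn, heatIntegrand_eq_indicator hbot, integral_indicator₀ hdom,
    integral_tilted]
  simp only [← Set.indicator_smul_apply_left (effectiveDomain J) _ fun y => y]
  rw [integral_indicator₀ hdom, ← integral_smul]
  simp only [div_eq_inv_mul _ (∫ _, _ ∂_), mul_smul]

end PosteriorMean

theorem postMean_tendsto_map_estimate_general (n : ℕ)
    (J : EuclideanSpace ℝ (Fin n) → EReal)
    (hJ_proper_bot : ∀ y, J y ≠ ⊥)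
    (hJ_lsc : LowerSemicontinuous J)
    (hJ_convex : ∀ y₁ y₂ : EuclideanSpace ℝ (Fin n), ∀ a b : ℝ, 0 ≤ a → 0 ≤ b → a + b = 1 →
      J (a • y₁ + b • y₂) ≤ (a : EReal) * J y₁ + (b : EReal) * J y₂)
    (hJ_int : (interior {y : EuclideanSpace ℝ (Fin n) | J y ≠ ⊤}).Nonempty)
    (x : EuclideanSpace ℝ (Fin n)) (t : ℝ) (ht : 0 < t) :
    ∃ uMAP : EuclideanSpace ℝ (Fin n),
      (∀ y : EuclideanSpace ℝ (Fin n),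
        (((‖x - uMAP‖ ^ 2 / (2 * t) : ℝ)) : EReal) + J uMAP
          ≤ (((‖x - y‖ ^ 2 / (2 * t) : ℝ)) : EReal) + J y) ∧
      (∀ u' : EuclideanSpace ℝ (Fin n),
        (∀ y : EuclideanSpace ℝ (Fin n),
          (((‖x - u'‖ ^ 2 / (2 * t) : ℝ)) : EReal) + J u'
            ≤ (((‖x - y‖ ^ 2 / (2 * t) : ℝ)) : EReal) + J y) → u' = uMAP) ∧
      Tendsto (fun ε : ℝ => postMean n J x t ε) (𝓝[>] (0 : ℝ)) (𝓝 uMAP) := by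
  have hconv := convexOn_toReal_of_forall_le hJ_proper_bot hJ_convex
  have hbot := mapObjective_ne_bot (x := x) (t := t) hJ_proper_bot
  have hstrong := strongConvexOn_toReal_mapObjective (x := x) (t := t) hJ_proper_bot hconv
  have hdom : effectiveDomain (mapObjective J x t) = effectiveDomain J :=
    effectiveDomain_mapObjective
  have hint : (interior (effectiveDomain (mapObjective J x t))).Nonempty := by rwa [hdom]
  have hne := hint.mono interior_subset
  obtain ⟨u, hu⟩ := exists_forall_le_of_strongConvexOn_toReal hbot
    (lowerSemicontinuous_mapObjective hJ_lsc) hne (inv_pos.2 ht) hstrong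
  refine ⟨u, hu, fun u' hu' =>
    eq_of_forall_le_of_strongConvexOn_toReal hbot hne (inv_pos.2 ht) hstrong hu' hu, ?_⟩
  simp only [postMean_eq_integral_tilted hJ_proper_bot (hconv.1.nullMeasurableSet volume), ← hdom]
  exact tendsto_integral_tilted_of_strongConvexOn (inv_pos.2 ht) hstrong hint
    (mem_effectiveDomain_of_forall_le hne hu) (isMinOn_toReal_of_forall_le hbot hu)

/-- For every `x ∈ ℝⁿ` and `t > 0`, `y ↦ ‖x−y‖²/(2t) + J(y)` has a unique minimizer
`u_MAP(x,t)` over `ℝⁿ`, and the posterior mean estimate converges to it in the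
vanishing-noise limit: `lim_{ε→0⁺} u_PM(x,t,ε) = u_MAP(x,t)`. -/
theorem postMean_tendsto_map_estimate (n : ℕ) (hn : 1 ≤ n)
    (J : EuclideanSpace ℝ (Fin n) → EReal)
    (hJ_proper_bot : ∀ y, J y ≠ ⊥)
    (hJ_lsc : LowerSemicontinuous J)
    (hJ_convex : ∀ y₁ y₂ : EuclideanSpace ℝ (Fin n), ∀ a b : ℝ, 0 ≤ a → 0 ≤ b → a + b = 1 →
      J (a • y₁ + b • y₂) ≤ (a : EReal) * J y₁ + (b : EReal) * J y₂)
    (hJ_int : (interior {y : EuclideanSpace ℝ (Fin n) | J y ≠ ⊤}).Nonempty)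
    (hJ_inf : (⨅ y : EuclideanSpace ℝ (Fin n), J y) = (0 : EReal))
    (x : EuclideanSpace ℝ (Fin n)) (t : ℝ) (ht : 0 < t) :
    ∃ uMAP : EuclideanSpace ℝ (Fin n),
      (∀ y : EuclideanSpace ℝ (Fin n),
        (((‖x - uMAP‖ ^ 2 / (2 * t) : ℝ)) : EReal) + J uMAP
          ≤ (((‖x - y‖ ^ 2 / (2 * t) : ℝ)) : EReal) + J y) ∧
      (∀ u' : EuclideanSpace ℝ (Fin n),
        (∀ y : EuclideanSpace ℝ (Fin n),
          (((‖x - u'‖ ^ 2 / (2 * t) : ℝ)) : EReal) + J u'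
            ≤ (((‖x - y‖ ^ 2 / (2 * t) : ℝ)) : EReal) + J y) → u' = uMAP) ∧
      Tendsto (fun ε : ℝ => postMean n J x t ε) (𝓝[>] (0 : ℝ)) (𝓝 uMAP) := by
  exact postMean_tendsto_map_estimate_general n J hJ_proper_bot hJ_lsc hJ_convex hJ_int x t ht
end
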